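/- For the exponential random graph model with parameter β in Dobrushin's uniqueness region Φ_β'(1) < 2 (with β subcritical), there exists a constant C > 0, depending only on β₁,…,β_k and H₁,…,H_k, such that for all n ≥ 2 the normalized number of edges W_n satisfies d_Wass(W_n, Z) ≤ C n^{−1/2} and d_Kol(W_n, Z) ≤ C n^{−1/2}, where Z is a standard normal random variable. -/

import Mathlib

open MeasureTheory ProbabilityTheory Real Finset

noncomputable section

/-- The index set `I = {(i,j) : 1 ≤ i < j ≤ n}` of potential edges on `n` labeled vertices. -/
def EdgeIdx (n : ℕ) : Type := {p : Fin n × Fin n // p.1 < p.2}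

instance (n : ℕ) : Fintype (EdgeIdx n) := by unfold EdgeIdx; infer_instance
instance (n : ℕ) : DecidableEq (EdgeIdx n) := by unfold EdgeIdx; infer_instance

/-- Adjacency of the graph `G_y` encoded by the edge-indicator vector `y`. -/
def yAdj {n : ℕ} (y : EdgeIdx n → Bool) (a b : Fin n) : Bool :=
  if h : a < b then y ⟨(a, b), h⟩ else if h' : b < a then y ⟨(b, a), h'⟩ else false

/-- The number of edges of a graph `H`. -/
def eCount {V : Type} [Fintype V] (H : SimpleGraph V) : ℕ :=
  Nat.card H.edgeSet

/-- `|Hom(H, G_y)|`: the number of injective maps from the vertex set of `H` to `Fin n`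
mapping every edge of `H` to an edge of `G_y`. -/
def homCount {V : Type} [Fintype V] {n : ℕ} (H : SimpleGraph V) (y : EdgeIdx n → Bool) : ℕ :=
  Nat.card {φ : V → Fin n //
    Function.Injective φ ∧ ∀ a b, H.Adj a b → yAdj y (φ a) (φ b) = true}

/-- `|Hom(H, G_y, s)|`: the number of pairs `(φ, (u, v))` where `φ` is injective, `(u, v)` is
an ordered pair of adjacent vertices of `H` with `{φ u, φ v} = s`, and every edge of `H` other
than `{u, v}` is mapped by `φ` to an edge of `G_y` (regardless of whether the edge `s` is
present in `G_y`). -/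
def homCountAt {V : Type} [Fintype V] {n : ℕ} (H : SimpleGraph V) (y : EdgeIdx n → Bool)
    (s : EdgeIdx n) : ℕ :=
  Nat.card {t : (V → Fin n) × V × V //
    Function.Injective t.1 ∧ H.Adj t.2.1 t.2.2 ∧
    Sym2.mk (t.1 t.2.1, t.1 t.2.2) = Sym2.mk (s.1.1, s.1.2) ∧
    ∀ a b, H.Adj a b → Sym2.mk (a, b) ≠ Sym2.mk (t.2.1, t.2.2) →
      yAdj y (t.1 a) (t.1 b) = true}

section ERGM

variable {k : ℕ} (β : Fin (k + 1) → ℝ) (v : Fin (k + 1) → ℕ)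
  (H : ∀ j : Fin (k + 1), SimpleGraph (Fin (v j)))

/-- The (unnormalized) ERGM weight `exp (Σ_j β_j n^{2−v_j} |Hom(H_j, G_y)|)`. -/
def ergmWeight (n : ℕ) (y : EdgeIdx n → Bool) : ℝ :=
  Real.exp (∑ j, β j * (n : ℝ) ^ ((2 : ℤ) - (v j : ℤ)) * (homCount (H j) y : ℝ))

/-- The ERGM normalizing constant. -/
def ergmZ (n : ℕ) : ℝ := ∑ y : EdgeIdx n → Bool, ergmWeight β v H n y

/-- The ERGM probability of the configuration `y`. -/
def ergmProb (n : ℕ) (y : EdgeIdx n → Bool) : ℝ := ergmWeight β v H n y / ergmZ β v H n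

/-- Expectation of `G(Y)` under the ERGM. -/
def ergmExp (n : ℕ) (G : (EdgeIdx n → Bool) → ℝ) : ℝ :=
  ∑ y : EdgeIdx n → Bool, ergmProb β v H n y * G y

/-- Variance of `G(Y)` under the ERGM. -/
def ergmVar (n : ℕ) (G : (EdgeIdx n → Bool) → ℝ) : ℝ :=
  ergmExp β v H n (fun y => (G y - ergmExp β v H n G) ^ 2)

/-- The total number of edges of `G_y`. -/
def edgeSum {n : ℕ} (y : EdgeIdx n → Bool) : ℝ :=
  ∑ s : EdgeIdx n, (if y s then (1 : ℝ) else 0)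

/-- `Φ_β(a) = Σ_j β_j e_j a^{e_j − 1}`. -/
def PhiFn : ℝ → ℝ := fun a =>
  ∑ j, β j * (eCount (H j) : ℝ) * a ^ (eCount (H j) - 1)

/-- `φ_β(a) = e^{2Φ_β(a)} / (e^{2Φ_β(a)} + 1)`. -/
def phiFn : ℝ → ℝ := fun a =>
  Real.exp (2 * PhiFn β v H a) / (Real.exp (2 * PhiFn β v H a) + 1)

/-- `σ_n² = N p (1−p) / (1 − 2 p (1−p) Φ_β'(p))` with `N = n(n−1)/2`. -/
def sigmaSq (p : ℝ) (n : ℕ) : ℝ :=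
  ((n : ℝ) * ((n : ℝ) - 1) / 2) * p * (1 - p) /
    (1 - 2 * p * (1 - p) * deriv (PhiFn β v H) p)

/-- `μ_n = E Σ_{s ∈ I} Y_s`. -/
def muN (n : ℕ) : ℝ := ergmExp β v H n (edgeSum)

/-- The standardized number of edges `W_n`. -/
def Wn (p : ℝ) (n : ℕ) (y : EdgeIdx n → Bool) : ℝ :=
  (edgeSum y - muN β v H n) / Real.sqrt (sigmaSq β v H p n)

end ERGM

/-!
The ERGM is the Gibbs measure of a multilinear polynomial in the edge indicators. The conditional
probability of an edge given the others is the logistic function of a sum of local monomials, so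
Dobrushin's condition bounds the total influence of the other edges on it. This makes the Glauber
dynamics contract oscillations. Through self-adjointness the contraction turns into a Poincaré
inequality, which provides the concentration of every local statistic around its mean-field value.

Linearizing the logistic function at the fixed point `p`, the sum of the conditional edge
probabilities is, up to a remainder of small variance, a linear function of the number of edges
with slope `2 p (1 - p) Φ'(p)`. Resampling one uniformly chosen edge therefore yields an
exchangeable pair which satisfies an approximate linear regression property, and Stein's method
gives the rate `n ^ (-1/2)`. For the Kolmogorov distance the solution `f` of Stein's equation has a
kink at `z`, but `f (x + d) - f x` differs from `d * f' x` by at most `d` times the increment of the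
bounded function `x f(x) - 1_{x ≤ z}`. The exchange identity turns the expected sum of these
increments over all edges back into the mean of a bounded function times a statistic of small
variance, so no rate is lost.
-/

/-! ### The logistic function -/

lemma abs_sigmoid_sub_le (a b : ℝ) : |sigmoid a - sigmoid b| ≤ 1 / 4 * |a - b| := by
  refine Convex.norm_image_sub_le_of_norm_deriv_le (s := Set.univ)
    (fun x _ => differentiableAt_sigmoid) (fun x _ => ?_) convex_univ (Set.mem_univ b)
    (Set.mem_univ a)
  rw [deriv_sigmoid, Real.norm_eq_abs, abs_of_nonneg
    (mul_nonneg (sigmoid_nonneg x) (sub_nonneg.2 (sigmoid_le_one x)))]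
  nlinarith [sq_nonneg (sigmoid x - 1 / 2)]

lemma abs_sigmoid_mul_one_sub_sub_le (x θ : ℝ) :
    |sigmoid x * (1 - sigmoid x) - sigmoid θ * (1 - sigmoid θ)| ≤ |x - θ| := by
  have h_factor : |1 - sigmoid x - sigmoid θ| ≤ 1 := by
    rw [abs_le]
    constructor <;> linarith [sigmoid_pos x, sigmoid_lt_one x, sigmoid_pos θ, sigmoid_lt_one θ]
  calc |sigmoid x * (1 - sigmoid x) - sigmoid θ * (1 - sigmoid θ)|
      = |sigmoid x - sigmoid θ| * |1 - sigmoid x - sigmoid θ| := by rw [← abs_mul]; ring_nf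
    _ ≤ |sigmoid x - sigmoid θ| * 1 := by gcongr
    _ ≤ |x - θ| := by linarith [abs_sigmoid_sub_le x θ, abs_nonneg (x - θ)]

lemma abs_sigmoid_sub_linear_le (θ a b : ℝ) :
    |sigmoid a - sigmoid b - sigmoid θ * (1 - sigmoid θ) * (a - b)| ≤
      |a - b| * (|a - θ| + |b - θ|) := by
  set c := sigmoid θ * (1 - sigmoid θ)
  have h_deriv (x : ℝ) : HasDerivAt (fun x => sigmoid x - c * x)
      (sigmoid x * (1 - sigmoid x) - c) x :=
    (hasDerivAt_sigmoid x).sub (by simpa using (hasDerivAt_id x).const_mul c)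
  have h_mvt := Convex.norm_image_sub_le_of_norm_hasDerivWithin_le
    (s := Set.uIcc b a) (C := |a - θ| + |b - θ|)
    (fun x _ => (h_deriv x).hasDerivWithinAt) (fun x hx => ?_) (convex_uIcc b a)
    Set.left_mem_uIcc Set.right_mem_uIcc
  · rw [show sigmoid a - sigmoid b - c * (a - b) = sigmoid a - c * a - (sigmoid b - c * b) by ring]
    exact h_mvt.trans (mul_comm _ _).le
  · refine (abs_sigmoid_mul_one_sub_sub_le x θ).trans ?_
    rcases Set.mem_uIcc.1 hx with ⟨hbx, hxa⟩ | ⟨hax, hxb⟩ <;>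
    · rw [abs_le]
      constructor <;>
        linarith [le_abs_self (a - θ), neg_abs_le (a - θ), le_abs_self (b - θ),
          neg_abs_le (b - θ), abs_nonneg (a - θ), abs_nonneg (b - θ)]

/-! ### Gibbs measures -/

section GibbsMean

variable {Ω : Type*} [Fintype Ω]

/-- The probability weights of the Gibbs measure proportional to `exp h`. -/
def gibbsWeight (h : Ω → ℝ) (y : Ω) : ℝ := exp (h y) / ∑ y', exp (h y')

/-- The expectation of `F` under the Gibbs measure proportional to `exp h`. -/
def gibbsMean (h : Ω → ℝ) (F : Ω → ℝ) : ℝ := ∑ y, gibbsWeight h y * F y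

/-- The variance of `F` under the Gibbs measure proportional to `exp h`. -/
def gibbsVar (h : Ω → ℝ) (F : Ω → ℝ) : ℝ :=
  gibbsMean h (fun y => (F y - gibbsMean h F) ^ 2)

variable (h F : Ω → ℝ)

lemma sum_exp_pos [Nonempty Ω] : 0 < ∑ y : Ω, exp (h y) :=
  sum_pos (fun _ _ => exp_pos _) univ_nonempty

lemma gibbsWeight_nonneg (y : Ω) : 0 ≤ gibbsWeight h y :=
  div_nonneg (exp_pos _).le (sum_nonneg fun _ _ => (exp_pos _).le)

lemma sum_gibbsWeight [Nonempty Ω] : ∑ y, gibbsWeight h y = 1 := by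
  simp only [gibbsWeight, ← sum_div, div_self (sum_exp_pos h).ne']

lemma gibbsMean_const [Nonempty Ω] (c : ℝ) : gibbsMean h (fun _ => c) = c := by
  simp [gibbsMean, ← sum_mul, sum_gibbsWeight]

lemma gibbsMean_add (F G : Ω → ℝ) :
    gibbsMean h (fun y => F y + G y) = gibbsMean h F + gibbsMean h G := by
  simp [gibbsMean, mul_add, sum_add_distrib]

lemma gibbsMean_sub (F G : Ω → ℝ) :
    gibbsMean h (fun y => F y - G y) = gibbsMean h F - gibbsMean h G := by
  simp [gibbsMean, mul_sub, sum_sub_distrib]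

lemma gibbsMean_const_mul (c : ℝ) : gibbsMean h (fun y => c * F y) = c * gibbsMean h F := by
  simp only [gibbsMean, mul_sum]
  exact sum_congr rfl fun y _ => by ring

lemma gibbsMean_sum {ι : Type*} (S : Finset ι) (F : ι → Ω → ℝ) :
    gibbsMean h (fun y => ∑ i ∈ S, F i y) = ∑ i ∈ S, gibbsMean h (F i) := by
  simp only [gibbsMean, mul_sum]
  exact sum_comm

variable {F} in
lemma gibbsMean_mono {G : Ω → ℝ} (hFG : ∀ y, F y ≤ G y) :
    gibbsMean h F ≤ gibbsMean h G :=
  sum_le_sum fun y _ => mul_le_mul_of_nonneg_left (hFG y) (gibbsWeight_nonneg h y)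

variable {F} in
lemma gibbsMean_nonneg (hF : ∀ y, 0 ≤ F y) : 0 ≤ gibbsMean h F :=
  sum_nonneg fun y _ => mul_nonneg (gibbsWeight_nonneg h y) (hF y)

variable {F} in
lemma gibbsMean_le_of_le [Nonempty Ω] {c : ℝ} (hF : ∀ y, F y ≤ c) : gibbsMean h F ≤ c :=
  (gibbsMean_mono h hF).trans (gibbsMean_const h c).le

lemma abs_gibbsMean_le : |gibbsMean h F| ≤ gibbsMean h (fun y => |F y|) := by
  refine (abs_sum_le_sum_abs _ _).trans_eq (sum_congr rfl fun y _ => ?_)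
  rw [abs_mul, abs_of_nonneg (gibbsWeight_nonneg h y)]

lemma sq_gibbsMean_mul_le (F G : Ω → ℝ) :
    gibbsMean h (fun y => F y * G y) ^ 2 ≤
      gibbsMean h (fun y => F y ^ 2) * gibbsMean h (fun y => G y ^ 2) := by
  refine sum_sq_le_sum_mul_sum_of_sq_le_mul _ (fun y _ => ?_) (fun y _ => ?_) (fun y _ => ?_)
  · exact mul_nonneg (gibbsWeight_nonneg h y) (sq_nonneg _)
  · exact mul_nonneg (gibbsWeight_nonneg h y) (sq_nonneg _)
  · exact le_of_eq (by ring)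

/-- The `L²` norm of `F` under the Gibbs measure proportional to `exp h`. -/
def gibbsL2 (h : Ω → ℝ) (F : Ω → ℝ) : ℝ := √(gibbsMean h fun y => F y ^ 2)

lemma gibbsL2_nonneg : 0 ≤ gibbsL2 h F := sqrt_nonneg _

lemma gibbsL2_sq : gibbsL2 h F ^ 2 = gibbsMean h fun y => F y ^ 2 :=
  sq_sqrt (gibbsMean_nonneg h fun _ => sq_nonneg _)

lemma gibbsL2_sub_gibbsMean : gibbsL2 h (fun y => F y - gibbsMean h F) = √(gibbsVar h F) := rfl

lemma abs_gibbsMean_mul_le (F G : Ω → ℝ) :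
    |gibbsMean h fun y => F y * G y| ≤ gibbsL2 h F * gibbsL2 h G := by
  rw [gibbsL2, gibbsL2, ← sqrt_mul (gibbsMean_nonneg h fun _ => sq_nonneg _)]
  exact abs_le_sqrt (sq_gibbsMean_mul_le h F G)

variable {F} in
lemma gibbsL2_mono {G : Ω → ℝ} (hFG : ∀ y, |F y| ≤ G y) :
    gibbsL2 h F ≤ gibbsL2 h G :=
  sqrt_le_sqrt (gibbsMean_mono h fun y => sq_le_sq' (neg_le_of_abs_le (hFG y))
    (le_of_abs_le (hFG y)))

lemma gibbsL2_abs : gibbsL2 h (fun y => |F y|) = gibbsL2 h F := by simp only [gibbsL2, sq_abs]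

lemma gibbsL2_const [Nonempty Ω] (c : ℝ) : gibbsL2 h (fun _ => c) = |c| := by
  rw [gibbsL2, gibbsMean_const, sqrt_sq_eq_abs]

lemma abs_gibbsMean_mul_le_of_abs_le [Nonempty Ω] (F : Ω → ℝ) {G : Ω → ℝ} {B : ℝ}
    (hG : ∀ y, |G y| ≤ B) : |gibbsMean h fun y => F y * G y| ≤ gibbsL2 h F * B := by
  have hB : 0 ≤ B := (abs_nonneg _).trans (hG (Classical.arbitrary Ω))
  refine (abs_gibbsMean_mul_le h F G).trans (mul_le_mul_of_nonneg_left ?_ (gibbsL2_nonneg h F))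
  simpa only [gibbsL2_const, abs_of_nonneg hB] using gibbsL2_mono h hG

lemma gibbsL2_const_mul {c : ℝ} (hc : 0 ≤ c) :
    gibbsL2 h (fun y => c * F y) = c * gibbsL2 h F := by
  simp only [gibbsL2, mul_pow, gibbsMean_const_mul]
  rw [sqrt_mul (sq_nonneg c), sqrt_sq hc]

lemma gibbsMean_abs_le_gibbsL2 [Nonempty Ω] : gibbsMean h (fun y => |F y|) ≤ gibbsL2 h F := by
  simpa [gibbsL2_abs, gibbsL2_const] using
    (le_abs_self _).trans (abs_gibbsMean_mul_le h (fun y => |F y|) fun _ => 1)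

lemma gibbsL2_add_le (F G : Ω → ℝ) :
    gibbsL2 h (fun y => F y + G y) ≤ gibbsL2 h F + gibbsL2 h G := by
  refine le_of_sq_le_sq ?_ (add_nonneg (gibbsL2_nonneg h F) (gibbsL2_nonneg h G))
  have h_expand (y : Ω) : (F y + G y) ^ 2 = F y ^ 2 + (2 * (F y * G y) + G y ^ 2) := by
    ring
  simp only [gibbsL2_sq, h_expand, gibbsMean_add, gibbsMean_const_mul, add_sq]
  linarith [le_of_abs_le (abs_gibbsMean_mul_le h F G)]

lemma gibbsL2_sum_le {ι : Type*} (S : Finset ι) (F : ι → Ω → ℝ) :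
    gibbsL2 h (fun y => ∑ i ∈ S, F i y) ≤ ∑ i ∈ S, gibbsL2 h (F i) := by
  classical
  induction S using Finset.induction_on with
  | empty => simp [gibbsL2, gibbsMean]
  | insert i S hi ih =>
    simp only [sum_insert hi]
    exact (gibbsL2_add_le h _ _).trans (by gcongr)

lemma gibbsL2_sub_const_le [Nonempty Ω] (c : ℝ) :
    gibbsL2 h (fun y => F y - c) ≤ √(gibbsVar h F) + |gibbsMean h F - c| := by
  simpa [gibbsL2_const, gibbsL2_sub_gibbsMean] using
    gibbsL2_add_le h (fun y => F y - gibbsMean h F) fun _ => gibbsMean h F - c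

end GibbsMean

section Cube

variable {I : Type*} [DecidableEq I]

/-- The discrete derivative `∂_s F` of a function on the cube in the coordinate `s`. -/
def discreteDeriv (s : I) (F : (I → Bool) → ℝ) (y : I → Bool) : ℝ :=
  F (Function.update y s true) - F (Function.update y s false)

/-- The probability that the coordinate `s` is present given all the others, under the Gibbs
measure proportional to `exp h`. -/
def condProb (h : (I → Bool) → ℝ) (s : I) (y : I → Bool) : ℝ := sigmoid (discreteDeriv s h y)

/-- The conditional expectation of `F` given all coordinates except `s`, under the Gibbs measure
proportional to `exp h`. -/
def resample (h : (I → Bool) → ℝ) (s : I) (F : (I → Bool) → ℝ) (y : I → Bool) : ℝ :=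
  condProb h s y * F (Function.update y s true) +
    (1 - condProb h s y) * F (Function.update y s false)

variable (h : (I → Bool) → ℝ) (s t : I) (F : (I → Bool) → ℝ) (y : I → Bool)

lemma discreteDeriv_update (b : Bool) :
    discreteDeriv s F (Function.update y s b) = discreteDeriv s F y := by
  simp [discreteDeriv]

lemma discreteDeriv_discreteDeriv_self : discreteDeriv s (discreteDeriv s F) y = 0 := by
  simp [discreteDeriv]

lemma discreteDeriv_sub_const (c : ℝ) :
    discreteDeriv s (fun y => F y - c) y = discreteDeriv s F y := by
  simp [discreteDeriv]

lemma discreteDeriv_const_mul (c : ℝ) :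
    discreteDeriv s (fun y => c * F y) y = c * discreteDeriv s F y := by
  simp only [discreteDeriv]; ring

lemma discreteDeriv_sum {ι : Type*} (S : Finset ι) (F : ι → (I → Bool) → ℝ) :
    discreteDeriv s (fun y => ∑ i ∈ S, F i y) y = ∑ i ∈ S, discreteDeriv s (F i) y := by
  simp only [discreteDeriv, sum_sub_distrib]

lemma condProb_update (b : Bool) : condProb h s (Function.update y s b) = condProb h s y := by
  simp [condProb, discreteDeriv_update]

lemma condProb_nonneg : 0 ≤ condProb h s y := sigmoid_nonneg _

lemma condProb_le_one : condProb h s y ≤ 1 := sigmoid_le_one _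

lemma resample_update (b : Bool) :
    resample h s F (Function.update y s b) = resample h s F y := by
  simp [resample, condProb_update]

variable {s} in
lemma resample_mul_of_update_eq {G : (I → Bool) → ℝ}
    (hG : ∀ y b, G (Function.update y s b) = G y) :
    resample h s (fun y => F y * G y) y = resample h s F y * G y := by
  simp only [resample, hG]; ring

lemma resample_sq_sub_sq_resample :
    resample h s (fun y => F y ^ 2) y - resample h s F y ^ 2 =
      condProb h s y * (1 - condProb h s y) * discreteDeriv s F y ^ 2 := by
  simp only [resample, discreteDeriv]; ring

lemma discreteDeriv_resample_self : discreteDeriv s (resample h s F) y = 0 := by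
  simp [discreteDeriv, resample_update]

lemma discreteDeriv_resample {s t : I} (hts : t ≠ s) :
    discreteDeriv t (resample h s F) y =
      condProb h s (Function.update y t true) * discreteDeriv t F (Function.update y s true) +
      (1 - condProb h s (Function.update y t true)) *
        discreteDeriv t F (Function.update y s false) +
      discreteDeriv t (condProb h s) y * discreteDeriv s F (Function.update y t false) := by
  simp only [discreteDeriv, resample, Function.update_comm hts]
  ring

variable [Fintype I]

lemma gibbsWeight_update_true :
    gibbsWeight h (Function.update y s true) = condProb h s y *
      (gibbsWeight h (Function.update y s true) + gibbsWeight h (Function.update y s false)) := by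
  simp only [gibbsWeight, condProb, discreteDeriv, sigmoid_def, neg_sub, exp_sub]
  field_simp

lemma gibbsWeight_update_false :
    gibbsWeight h (Function.update y s false) = (1 - condProb h s y) *
      (gibbsWeight h (Function.update y s true) + gibbsWeight h (Function.update y s false)) := by
  linarith [gibbsWeight_update_true h s y]

lemma sum_eq_half_sum_update :
    ∑ y, F y = 1 / 2 * ∑ y, (F (Function.update y s true) + F (Function.update y s false)) := by
  have h_flip : ∑ y : I → Bool, F (Function.update y s (!y s)) = ∑ y : I → Bool, F y :=
    Equiv.sum_comp (Function.Involutive.toPerm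
      (fun y : I → Bool => Function.update y s (!y s)) fun y => by simp) F
  have h_pair (y : I → Bool) : F (Function.update y s true) + F (Function.update y s false) =
      F y + F (Function.update y s (!y s)) := by
    have h_self := Function.update_eq_self s y
    cases hy : y s <;> rw [hy] at h_self <;> simp [h_self, add_comm]
  simp only [h_pair, sum_add_distrib, h_flip]
  ring

lemma gibbsMean_resample : gibbsMean h (resample h s F) = gibbsMean h F := by
  unfold gibbsMean
  rw [sum_eq_half_sum_update s (fun y => gibbsWeight h y * F y),
    sum_eq_half_sum_update s (fun y => gibbsWeight h y * resample h s F y)]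
  congr 1
  refine sum_congr rfl fun y _ => ?_
  simp only [resample_update]
  unfold resample
  linear_combination -F (Function.update y s true) * gibbsWeight_update_true h s y -
    F (Function.update y s false) * gibbsWeight_update_false h s y

lemma gibbsMean_mul_resample (F G : (I → Bool) → ℝ) :
    gibbsMean h (fun y => F y * resample h s G y) =
      gibbsMean h (fun y => resample h s F y * resample h s G y) := by
  rw [← gibbsMean_resample h s]
  congr 1 with y
  exact resample_mul_of_update_eq h F y (resample_update h s G)

lemma gibbsMean_sq_le_gibbsMean_resample_sq_add :
    gibbsMean h (fun y => F y ^ 2) ≤ gibbsMean h (fun y => resample h s F y ^ 2) +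
      1 / 4 * gibbsMean h (fun y => discreteDeriv s F y ^ 2) := by
  rw [← gibbsMean_resample h s fun y => F y ^ 2, ← gibbsMean_const_mul, ← gibbsMean_add]
  refine gibbsMean_mono h fun y => ?_
  rw [← sub_le_iff_le_add', resample_sq_sub_sq_resample]
  gcongr
  nlinarith [sq_nonneg (condProb h s y - 1 / 2)]

end Cube

/-! ### The Poincaré inequality under Dobrushin's condition -/

lemma pow_div_mul_le_of_sq_le_mul {a : ℕ → ℝ} (h_zero : 0 < a 0) (h_one : 0 < a 1)
    (h_conv : ∀ m, a (m + 1) ^ 2 ≤ a m * a (m + 2)) (m : ℕ) : (a 1 / a 0) ^ m * a 0 ≤ a m := by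
  set r := a 1 / a 0 with hr
  have hr_pos : 0 < r := div_pos h_one h_zero
  have h_ratio (m : ℕ) : 0 < a m ∧ r * a m ≤ a (m + 1) := by
    induction m with
    | zero => exact ⟨h_zero, by rw [hr, div_mul_cancel₀ _ h_zero.ne']⟩
    | succ m ih =>
      obtain ⟨h_pos, h_le⟩ := ih
      have h_succ_pos : 0 < a (m + 1) := (mul_pos hr_pos h_pos).trans_le h_le
      exact ⟨h_succ_pos, le_of_mul_le_mul_left (by nlinarith [h_conv m]) h_pos⟩
  induction m with
  | zero => simp
  | succ m ih =>
    rw [pow_succ', mul_assoc]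
    exact (mul_le_mul_of_nonneg_left ih hr_pos.le).trans (h_ratio m).2

lemma le_mul_of_sq_le_mul_of_le_geometric {a : ℕ → ℝ} {q D : ℝ} (hq : 0 ≤ q)
    (h_nonneg : ∀ m, 0 ≤ a m) (h_conv : ∀ m, a (m + 1) ^ 2 ≤ a m * a (m + 2))
    (h_geom : ∀ m, a m ≤ q ^ m * D) : a 1 ≤ q * a 0 := by
  by_contra! h_lt
  have h_one : 0 < a 1 := (mul_nonneg hq (h_nonneg 0)).trans_lt h_lt
  have h_zero : 0 < a 0 :=
    pos_of_mul_pos_left ((pow_pos h_one 2).trans_le (h_conv 0)) (h_nonneg 2)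
  have hr_pos : 0 < a 1 / a 0 := div_pos h_one h_zero
  have hq_lt : q < a 1 / a 0 := by rwa [lt_div_iff₀ h_zero]
  have h_lim : Filter.Tendsto (fun m : ℕ => (q / (a 1 / a 0)) ^ m * D) Filter.atTop (nhds 0) := by
    simpa using (tendsto_pow_atTop_nhds_zero_of_lt_one (by positivity)
      ((div_lt_one hr_pos).2 hq_lt)).mul_const D
  refine absurd (ge_of_tendsto' h_lim fun m => ?_) h_zero.not_ge
  rw [div_pow, div_mul_eq_mul_div, le_div_iff₀ (pow_pos hr_pos m), mul_comm (a 0)]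
  exact (pow_div_mul_le_of_sq_le_mul h_zero h_one h_conv m).trans (h_geom m)

section Poincare

variable {I : Type*} [DecidableEq I] (h : (I → Bool) → ℝ) (s t : I)
  (F : (I → Bool) → ℝ) (y : I → Bool)

/-- The oscillation `sup_y |∂_t F(y)|` of `F` in the coordinate `t`. -/
def coordOsc (t : I) (F : (I → Bool) → ℝ) : ℝ := ⨆ y, |discreteDeriv t F y|

variable {t F} in
lemma coordOsc_le {c : ℝ} (hF : ∀ y, |discreteDeriv t F y| ≤ c) : coordOsc t F ≤ c :=
  ciSup_le hF

lemma coordOsc_resample_self : coordOsc s (resample h s F) = 0 := by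
  simp [coordOsc, discreteDeriv_resample_self]

section Finite

variable [Finite I]

lemma abs_discreteDeriv_le_coordOsc : |discreteDeriv t F y| ≤ coordOsc t F :=
  le_ciSup (f := fun y => |discreteDeriv t F y|) (Set.finite_range _).bddAbove y

lemma coordOsc_nonneg : 0 ≤ coordOsc t F :=
  (abs_nonneg _).trans (abs_discreteDeriv_le_coordOsc t F fun _ => true)

lemma abs_sub_update_le (b : Bool) : |F y - F (Function.update y t b)| ≤ coordOsc t F := by
  have h_osc : |F (Function.update y t true) - F (Function.update y t false)| ≤ coordOsc t F :=
    abs_discreteDeriv_le_coordOsc t F y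
  have h_update (a : Bool) :
      |F (Function.update y t a) - F (Function.update y t b)| ≤ coordOsc t F := by
    cases a <;> cases b
    · simp only [sub_self, abs_zero, coordOsc_nonneg]
    · rwa [abs_sub_comm]
    · exact h_osc
    · simp only [sub_self, abs_zero, coordOsc_nonneg]
  simpa only [Function.update_eq_self] using h_update (y t)

lemma coordOsc_resample_le {s t : I} (hts : t ≠ s) :
    coordOsc t (resample h s F) ≤
      coordOsc t F + coordOsc t (condProb h s) * coordOsc s F := by
  refine coordOsc_le fun y => ?_
  rw [discreteDeriv_resample h F y hts]
  set q := condProb h s (Function.update y t true)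
  have hq : 0 ≤ q := condProb_nonneg _ _ _
  have hq' : 0 ≤ 1 - q := sub_nonneg.2 (condProb_le_one _ _ _)
  calc _ ≤ q * |discreteDeriv t F (Function.update y s true)| +
        (1 - q) * |discreteDeriv t F (Function.update y s false)| +
        |discreteDeriv t (condProb h s) y| * |discreteDeriv s F (Function.update y t false)| := by
        refine (abs_add_le _ _).trans (add_le_add ((abs_add_le _ _).trans ?_) (abs_mul _ _).le)
        rw [abs_mul, abs_mul, abs_of_nonneg hq, abs_of_nonneg hq']
    _ ≤ q * coordOsc t F + (1 - q) * coordOsc t F +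
        coordOsc t (condProb h s) * coordOsc s F := by
        gcongr <;> first | exact abs_discreteDeriv_le_coordOsc _ _ _ | exact coordOsc_nonneg _ _
    _ = _ := by ring

end Finite

variable [Fintype I]

lemma abs_sub_le_sum_coordOsc (y y' : I → Bool) : |F y - F y'| ≤ ∑ t, coordOsc t F := by
  suffices h_piecewise : ∀ (S : Finset I) (y : I → Bool),
      |F y - F (S.piecewise y' y)| ≤ ∑ t ∈ S, coordOsc t F by
    simpa using h_piecewise univ y
  intro S
  induction S using Finset.induction_on with
  | empty => simp
  | insert a S ha ih =>
    intro y
    rw [sum_insert ha, show (insert a S).piecewise y' y =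
      S.piecewise y' (Function.update y a (y' a)) by
        rw [Finset.piecewise_insert, Finset.update_piecewise_of_notMem _ _ _ ha]]
    exact (abs_sub_le _ _ _).trans (add_le_add (abs_sub_update_le a F y (y' a)) (ih _))

/-- The transition operator of the Glauber dynamics, which resamples a uniformly chosen
coordinate. -/
def glauber (h : (I → Bool) → ℝ) (F : (I → Bool) → ℝ) (y : I → Bool) : ℝ :=
  (Fintype.card I : ℝ)⁻¹ * ∑ s, resample h s F y

lemma coordOsc_glauber_le : coordOsc t (glauber h F) ≤
    (Fintype.card I : ℝ)⁻¹ * ∑ s, coordOsc t (resample h s F) := by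
  refine coordOsc_le fun y => ?_
  unfold glauber
  rw [discreteDeriv_const_mul, discreteDeriv_sum, abs_mul, abs_of_nonneg (by positivity)]
  gcongr
  exact (abs_sum_le_sum_abs _ _).trans
    (sum_le_sum fun s _ => abs_discreteDeriv_le_coordOsc _ _ _)

lemma sum_coordOsc_resample_le : ∑ s, coordOsc t (resample h s F) ≤
    (Fintype.card I - 1) * coordOsc t F +
      ∑ s, coordOsc t (condProb h s) * coordOsc s F := by
  rw [← add_sum_erase _ _ (mem_univ t), coordOsc_resample_self, zero_add]
  calc ∑ s ∈ univ.erase t, coordOsc t (resample h s F)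
      ≤ ∑ s ∈ univ.erase t,
          (coordOsc t F + coordOsc t (condProb h s) * coordOsc s F) :=
        sum_le_sum fun s hs => coordOsc_resample_le h F (ne_of_mem_erase hs).symm
    _ ≤ (Fintype.card I - 1) * coordOsc t F +
          ∑ s, coordOsc t (condProb h s) * coordOsc s F := by
        rw [sum_add_distrib, sum_const, nsmul_eq_mul, cast_card_erase_of_mem (mem_univ t),
          card_univ]
        gcongr
        · intros
          exact mul_nonneg (coordOsc_nonneg _ _) (coordOsc_nonneg _ _)
        · exact erase_subset _ _

variable {ρ : ℝ}

lemma sum_coordOsc_glauber_le [Nonempty I]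
    (hρ : ∀ s, ∑ t, coordOsc t (condProb h s) ≤ ρ) :
    ∑ t, coordOsc t (glauber h F) ≤
      (1 - (1 - ρ) / Fintype.card I) * ∑ t, coordOsc t F := by
  set N : ℝ := (Fintype.card I : ℝ)
  have hN : 0 < N := Nat.cast_pos.2 Fintype.card_pos
  have h_swap : ∑ t, ∑ s, coordOsc t (condProb h s) * coordOsc s F ≤
      ρ * ∑ s, coordOsc s F := by
    rw [sum_comm, mul_sum]
    simp only [← sum_mul]
    exact sum_le_sum fun s _ => mul_le_mul_of_nonneg_right (hρ s) (coordOsc_nonneg _ _)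
  calc ∑ t, coordOsc t (glauber h F)
      ≤ ∑ t, N⁻¹ * ((N - 1) * coordOsc t F +
          ∑ s, coordOsc t (condProb h s) * coordOsc s F) :=
        sum_le_sum fun t _ => (coordOsc_glauber_le h t F).trans
          (mul_le_mul_of_nonneg_left (sum_coordOsc_resample_le h t F) (inv_pos.2 hN).le)
    _ = N⁻¹ * ((N - 1) * ∑ t, coordOsc t F +
          ∑ t, ∑ s, coordOsc t (condProb h s) * coordOsc s F) := by
        rw [← mul_sum, sum_add_distrib, ← mul_sum]
    _ ≤ N⁻¹ * ((N - 1) * ∑ t, coordOsc t F + ρ * ∑ s, coordOsc s F) := by gcongr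
    _ = _ := by field_simp; ring

lemma gibbsMean_glauber [Nonempty I] : gibbsMean h (glauber h F) = gibbsMean h F := by
  unfold glauber
  rw [gibbsMean_const_mul, gibbsMean_sum]
  simp [gibbsMean_resample]

lemma card_mul_gibbsMean_mul_glauber [Nonempty I] (F G : (I → Bool) → ℝ) :
    Fintype.card I * gibbsMean h (fun y => F y * glauber h G y) =
      ∑ s, gibbsMean h (fun y => resample h s F y * resample h s G y) := by
  simp only [← gibbsMean_mul_resample]
  rw [← gibbsMean_sum, ← gibbsMean_const_mul]
  congr 1 with y
  rw [glauber, ← mul_sum]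
  field_simp

lemma gibbsMean_mul_glauber_comm [Nonempty I] (F G : (I → Bool) → ℝ) :
    gibbsMean h (fun y => F y * glauber h G y) = gibbsMean h (fun y => glauber h F y * G y) := by
  refine mul_left_cancel₀ (Nat.cast_ne_zero (R := ℝ).2 (Fintype.card_ne_zero (α := I))) ?_
  simp only [mul_comm (glauber h F _), card_mul_gibbsMean_mul_glauber, mul_comm (resample h _ G _)]

lemma gibbsMean_sq_glauber_sq_le [Nonempty I] :
    gibbsMean h (fun y => glauber h F y ^ 2) ^ 2 ≤
      gibbsMean h (fun y => F y ^ 2) * gibbsMean h (fun y => glauber h (glauber h F) y ^ 2) := by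
  simp only [sq (glauber h F _), ← gibbsMean_mul_glauber_comm]
  exact sq_gibbsMean_mul_le _ _ _

variable {F} in
lemma gibbsMean_sq_le_of_gibbsMean_eq_zero (hF : gibbsMean h F = 0) :
    gibbsMean h (fun y => F y ^ 2) ≤ (∑ t, coordOsc t F) ^ 2 := by
  refine gibbsMean_le_of_le h fun y => sq_le_sq' (neg_le_of_abs_le ?_) (le_of_abs_le ?_) <;>
  · calc |F y| = |gibbsMean h fun y' => F y - F y'| := by
          rw [gibbsMean_sub, gibbsMean_const, hF, sub_zero]
      _ ≤ _ := (abs_gibbsMean_le _ _).trans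
          (gibbsMean_le_of_le h fun y' => abs_sub_le_sum_coordOsc F y y')

lemma one_sub_div_card_nonneg [Nonempty I] (hρ : ∀ s, ∑ t, coordOsc t (condProb h s) ≤ ρ) :
    0 ≤ 1 - (1 - ρ) / Fintype.card I := by
  have hρ_nonneg : 0 ≤ ρ := (sum_nonneg fun t _ => coordOsc_nonneg _ _).trans
    (hρ (Classical.arbitrary I))
  have h_card : (1 : ℝ) ≤ Fintype.card I := Nat.one_le_cast.2 Fintype.card_pos
  rw [sub_nonneg, div_le_one (by linarith)]
  linarith

lemma sum_coordOsc_iterate_glauber_le [Nonempty I]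
    (hρ : ∀ s, ∑ t, coordOsc t (condProb h s) ≤ ρ) (m : ℕ) :
    ∑ t, coordOsc t ((glauber h)^[m] F) ≤
      (1 - (1 - ρ) / Fintype.card I) ^ m * ∑ t, coordOsc t F := by
  induction m with
  | zero => simp
  | succ m ih =>
    rw [Function.iterate_succ_apply', pow_succ', mul_assoc]
    exact (sum_coordOsc_glauber_le h _ hρ).trans
      (mul_le_mul_of_nonneg_left ih (one_sub_div_card_nonneg h hρ))

lemma gibbsMean_iterate_glauber [Nonempty I] (m : ℕ) :
    gibbsMean h ((glauber h)^[m] F) = gibbsMean h F := by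
  induction m with
  | zero => rfl
  | succ m ih => rw [Function.iterate_succ_apply', gibbsMean_glauber, ih]

-- Self-adjointness makes `m ↦ 𝔼 (P^m F)²` log-convex, so the geometric decay of oscillations
-- along the iterates, whatever its constant, already forces contraction in the first step.
lemma gibbsMean_sq_glauber_le [Nonempty I] (hρ : ∀ s, ∑ t, coordOsc t (condProb h s) ≤ ρ)
    (hF : gibbsMean h F = 0) :
    gibbsMean h (fun y => glauber h F y ^ 2) ≤
      (1 - (1 - ρ) / Fintype.card I) ^ 2 * gibbsMean h (fun y => F y ^ 2) := by
  set q := 1 - (1 - ρ) / Fintype.card I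
  refine le_mul_of_sq_le_mul_of_le_geometric (D := (∑ t, coordOsc t F) ^ 2)
    (a := fun m => gibbsMean h fun y => (glauber h)^[m] F y ^ 2) (sq_nonneg _)
    (fun m => gibbsMean_nonneg h fun y => sq_nonneg _) (fun m => ?_) (fun m => ?_)
  · simpa only [Function.iterate_succ_apply'] using
      gibbsMean_sq_glauber_sq_le h ((glauber h)^[m] F)
  · rw [pow_right_comm, ← mul_pow]
    refine (gibbsMean_sq_le_of_gibbsMean_eq_zero h
      ((gibbsMean_iterate_glauber h F m).trans hF)).trans ?_
    gcongr
    · exact sum_nonneg fun t _ => coordOsc_nonneg _ _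
    · exact sum_coordOsc_iterate_glauber_le h F hρ m

lemma gibbsMean_mul_glauber_le [Nonempty I] (hρ : ∀ s, ∑ t, coordOsc t (condProb h s) ≤ ρ)
    (hF : gibbsMean h F = 0) :
    gibbsMean h (fun y => F y * glauber h F y) ≤
      (1 - (1 - ρ) / Fintype.card I) * gibbsMean h (fun y => F y ^ 2) := by
  have h_sq : 0 ≤ gibbsMean h (fun y => F y ^ 2) := gibbsMean_nonneg h fun y => sq_nonneg _
  refine le_of_sq_le_sq ((sq_gibbsMean_mul_le h F (glauber h F)).trans ?_)
    (mul_nonneg (one_sub_div_card_nonneg h hρ) h_sq)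
  calc _ ≤ _ := mul_le_mul_of_nonneg_left (gibbsMean_sq_glauber_le h F hρ hF) h_sq
    _ = _ := by ring

lemma card_mul_gibbsMean_sq_le [Nonempty I] :
    Fintype.card I * gibbsMean h (fun y => F y ^ 2) ≤
      Fintype.card I * gibbsMean h (fun y => F y * glauber h F y) +
        1 / 4 * ∑ s, gibbsMean h (fun y => discreteDeriv s F y ^ 2) := by
  rw [card_mul_gibbsMean_mul_glauber, mul_sum, ← sum_add_distrib, ← nsmul_eq_mul, ← card_univ,
    ← sum_const]
  refine sum_le_sum fun s _ => ?_
  simpa only [sq (resample h s F _)] using gibbsMean_sq_le_gibbsMean_resample_sq_add h s F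

theorem gibbsVar_le_sum_of_sum_coordOsc_condProb_le [Nonempty I] (hρ_lt : ρ < 1)
    (hρ : ∀ s, ∑ t, coordOsc t (condProb h s) ≤ ρ) :
    gibbsVar h F ≤ 1 / (4 * (1 - ρ)) * ∑ s, gibbsMean h (fun y => discreteDeriv s F y ^ 2) := by
  have h_centred : gibbsMean h (fun y => F y - gibbsMean h F) = 0 := by
    rw [gibbsMean_sub, gibbsMean_const, sub_self]
  have h_dirichlet := card_mul_gibbsMean_sq_le h fun y => F y - gibbsMean h F
  have h_gap := gibbsMean_mul_glauber_le h _ hρ h_centred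
  simp only [discreteDeriv_sub_const] at h_dirichlet
  change _ ≤ _ * gibbsVar h F at h_gap
  change _ * gibbsVar h F ≤ _ at h_dirichlet
  have h_card : (0 : ℝ) < Fintype.card I := Nat.cast_pos.2 Fintype.card_pos
  have h_expand : Fintype.card I * ((1 - (1 - ρ) / Fintype.card I) * gibbsVar h F) =
      Fintype.card I * gibbsVar h F - (1 - ρ) * gibbsVar h F := by field_simp
  rw [div_mul_eq_mul_div, le_div_iff₀ (by linarith)]
  linarith [mul_le_mul_of_nonneg_left h_gap h_card.le]

end Poincare

/-! ### Multilinear Hamiltonians -/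

section BoolMonomial

variable {I : Type*}

/-- The monomial `∏_{t ∈ S} y_t`, that is, the indicator that all coordinates in `S` are present. -/
def boolMonomial (S : Finset I) (y : I → Bool) : ℝ := ∏ t ∈ S, if y t then 1 else 0

lemma boolMonomial_empty : boolMonomial (∅ : Finset I) = fun _ => 1 := by
  ext; simp [boolMonomial]

lemma boolMonomial_nonneg (S : Finset I) (y : I → Bool) : 0 ≤ boolMonomial S y :=
  prod_nonneg fun t _ => by split_ifs <;> norm_num

lemma boolMonomial_le_one (S : Finset I) (y : I → Bool) : boolMonomial S y ≤ 1 :=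
  prod_le_one (fun t _ => by split_ifs <;> norm_num) fun t _ => by split_ifs <;> norm_num

lemma abs_boolMonomial_le_one (S : Finset I) (y : I → Bool) : |boolMonomial S y| ≤ 1 :=
  (abs_of_nonneg (boolMonomial_nonneg S y)).trans_le (boolMonomial_le_one S y)

variable [DecidableEq I]

lemma boolMonomial_update_of_notMem {S : Finset I} {s : I} (hs : s ∉ S) (y : I → Bool) (b : Bool) :
    boolMonomial S (Function.update y s b) = boolMonomial S y :=
  prod_congr rfl fun t ht => by rw [Function.update_of_ne (ne_of_mem_of_not_mem ht hs)]

lemma boolMonomial_insert {S : Finset I} {s : I} (hs : s ∉ S) (y : I → Bool) :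
    boolMonomial (insert s S) y = boolMonomial {s} y * boolMonomial S y := by
  simp [boolMonomial, prod_insert hs]

lemma discreteDeriv_boolMonomial (S : Finset I) (s : I) (y : I → Bool) :
    discreteDeriv s (boolMonomial S) y = if s ∈ S then boolMonomial (S.erase s) y else 0 := by
  split_ifs with hs
  · have hs' : s ∉ S.erase s := notMem_erase s S
    rw [← insert_erase hs]
    simp only [discreteDeriv, boolMonomial_insert hs', boolMonomial_update_of_notMem hs',
      erase_insert_eq_erase]
    simp [boolMonomial]
  · simp [discreteDeriv, boolMonomial_update_of_notMem hs]

lemma abs_discreteDeriv_boolMonomial_le (S : Finset I) (s : I) (y : I → Bool) :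
    |discreteDeriv s (boolMonomial S) y| ≤ if s ∈ S then 1 else 0 := by
  rw [discreteDeriv_boolMonomial]
  split_ifs
  · exact abs_boolMonomial_le_one _ _
  · simp

lemma resample_boolMonomial_singleton (h : (I → Bool) → ℝ) (s : I) :
    resample h s (boolMonomial {s}) = condProb h s := by
  ext y; simp [resample, boolMonomial]

variable [Fintype I]

lemma sum_discreteDeriv_boolMonomial_singleton (t : I) (y : I → Bool) :
    ∑ s, discreteDeriv t (boolMonomial {s}) y = 1 := by
  simp [discreteDeriv_boolMonomial, boolMonomial_empty]

lemma gibbsMean_condProb (h : (I → Bool) → ℝ) (s : I) :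
    gibbsMean h (condProb h s) = gibbsMean h (boolMonomial {s}) := by
  rw [← resample_boolMonomial_singleton, gibbsMean_resample]

lemma gibbsMean_boolMonomial_singleton_mul (h : (I → Bool) → ℝ) {s : I} {G : (I → Bool) → ℝ}
    (hG : ∀ y b, G (Function.update y s b) = G y) :
    gibbsMean h (fun y => boolMonomial {s} y * G y) =
      gibbsMean h (fun y => condProb h s y * G y) := by
  rw [← gibbsMean_resample h s]
  congr 1 with y
  rw [resample_mul_of_update_eq _ _ _ hG, resample_boolMonomial_singleton]

lemma gibbsMean_boolMonomial_insert_sub (h : (I → Bool) → ℝ) {S : Finset I} {s : I} (hs : s ∉ S) :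
    gibbsMean h (boolMonomial (insert s S)) -
        gibbsMean h (boolMonomial {s}) * gibbsMean h (boolMonomial S) =
      gibbsMean h (fun y => (condProb h s y - gibbsMean h (condProb h s)) * boolMonomial S y) := by
  rw [funext (boolMonomial_insert hs),
    gibbsMean_boolMonomial_singleton_mul _ (boolMonomial_update_of_notMem hs), ← gibbsMean_condProb,
    ← gibbsMean_const_mul, ← gibbsMean_sub]
  simp only [sub_mul]

end BoolMonomial

lemma abs_prod_sub_pow_le {ι : Type*} {a : ι → ℝ} {p b : ℝ} (ha : ∀ t, 0 ≤ a t)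
    (ha' : ∀ t, a t ≤ 1) (hp : 0 ≤ p) (hp' : p ≤ 1) (hb : ∀ t, |a t - p| ≤ b) (S : Finset ι) :
    |∏ t ∈ S, a t - p ^ S.card| ≤ S.card * b := by
  classical
  induction S using Finset.induction_on with
  | empty => simp
  | insert s S hs ih =>
    rw [prod_insert hs, card_insert_of_notMem hs, pow_succ']
    calc |a s * ∏ t ∈ S, a t - p * p ^ S.card|
        = |a s * (∏ t ∈ S, a t - p ^ S.card) + (a s - p) * p ^ S.card| := by ring_nf
      _ ≤ a s * |∏ t ∈ S, a t - p ^ S.card| + |a s - p| * p ^ S.card := by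
          refine (abs_add_le _ _).trans_eq ?_
          rw [abs_mul, abs_mul, abs_of_nonneg (ha s), abs_of_nonneg (pow_nonneg hp _)]
      _ ≤ 1 * (S.card * b) + b * 1 := by
          gcongr
          · exact ha' s
          · exact (abs_nonneg _).trans (hb s)
          · exact hb s
          · exact pow_le_one₀ hp hp'
      _ = _ := by push_cast; ring

section Hamiltonian

variable {I : Type*} [DecidableEq I] {A : Type*} [Fintype A]

/-- The multilinear Hamiltonian `∑_α c_α ∏_{t ∈ T_α} y_t`. -/
def hamiltonian (T : A → Finset I) (c : A → ℝ) (y : I → Bool) : ℝ :=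
  ∑ α, c α * boolMonomial (T α) y

/-- The total absolute weight of the monomials of a multilinear Hamiltonian which contain both `s`
and `t`. It bounds `|∂_s ∂_t h|` and so measures the interaction of `s` and `t`. -/
def jointWeight (T : A → Finset I) (c : A → ℝ) (s t : I) : ℝ :=
  ∑ α with s ∈ T α ∧ t ∈ T α, |c α|

/-- The total influence `∑_{s ≠ t} ∂_t ∂_s h` of the coordinate `t` on the local fields `∂_s h`. -/
def influence (T : A → Finset I) (c : A → ℝ) (t : I) (y : I → Bool) : ℝ :=
  ∑ α with t ∈ T α, c α * ∑ s ∈ (T α).erase t, boolMonomial (((T α).erase t).erase s) y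

variable (T : A → Finset I) (c : A → ℝ) {s t : I} (y : I → Bool)

lemma jointWeight_comm (s t : I) : jointWeight T c s t = jointWeight T c t s := by
  simp only [jointWeight, and_comm]

lemma jointWeight_nonneg (s t : I) : 0 ≤ jointWeight T c s t :=
  sum_nonneg fun _ _ => abs_nonneg _

lemma discreteDeriv_hamiltonian (s : I) : discreteDeriv s (hamiltonian T c) y =
    ∑ α with s ∈ T α, c α * boolMonomial ((T α).erase s) y := by
  unfold hamiltonian
  simp only [discreteDeriv_sum, discreteDeriv_const_mul, discreteDeriv_boolMonomial, sum_filter,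
    mul_ite, mul_zero]

lemma discreteDeriv_discreteDeriv_hamiltonian (hts : t ≠ s) :
    discreteDeriv t (discreteDeriv s (hamiltonian T c)) y =
      ∑ α with s ∈ T α ∧ t ∈ T α, c α * boolMonomial (((T α).erase s).erase t) y := by
  rw [funext fun y => discreteDeriv_hamiltonian T c y s]
  simp only [discreteDeriv_sum, discreteDeriv_const_mul, discreteDeriv_boolMonomial, mem_erase, hts,
    ne_eq, not_false_eq_true, true_and, mul_ite, mul_zero]
  rw [← sum_filter, filter_filter]

lemma abs_discreteDeriv_discreteDeriv_hamiltonian_le (hts : t ≠ s) :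
    |discreteDeriv t (discreteDeriv s (hamiltonian T c)) y| ≤ jointWeight T c s t := by
  rw [discreteDeriv_discreteDeriv_hamiltonian T c y hts]
  refine (abs_sum_le_sum_abs _ _).trans (sum_le_sum fun α _ => ?_)
  rw [abs_mul]
  exact mul_le_of_le_one_right (abs_nonneg _) (abs_boolMonomial_le_one _ _)

lemma discreteDeriv_condProb_self (h : (I → Bool) → ℝ) (s : I) :
    discreteDeriv s (condProb h s) y = 0 := by
  simp [discreteDeriv, condProb_update]

lemma abs_discreteDeriv_condProb_le (hts : t ≠ s) :
    |discreteDeriv t (condProb (hamiltonian T c) s) y| ≤ 1 / 4 * jointWeight T c s t :=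
  (abs_sigmoid_sub_le _ _).trans (mul_le_mul_of_nonneg_left
    (abs_discreteDeriv_discreteDeriv_hamiltonian_le T c y hts) (by norm_num))

lemma discreteDeriv_influence_self (t : I) : discreteDeriv t (influence T c t) y = 0 := by
  unfold influence
  simp [discreteDeriv_sum, discreteDeriv_const_mul, discreteDeriv_boolMonomial]

lemma abs_discreteDeriv_influence_le {m : ℝ} (hm : ∀ α, ((T α).card : ℝ) ≤ m) (s t : I) :
    |discreteDeriv s (influence T c t) y| ≤ m * jointWeight T c t s := by
  unfold influence jointWeight
  simp only [discreteDeriv_sum, discreteDeriv_const_mul]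
  rw [← filter_filter, sum_filter (fun α => s ∈ T α), mul_sum]
  refine (abs_sum_le_sum_abs _ _).trans (sum_le_sum fun α _ => ?_)
  rw [abs_mul, mul_comm m, ite_mul, zero_mul]
  have h_term (r : I) : |discreteDeriv s (boolMonomial (((T α).erase t).erase r)) y| ≤
      if s ∈ T α then 1 else 0 := by
    refine (abs_discreteDeriv_boolMonomial_le _ s y).trans ?_
    split_ifs <;> simp_all
  have h_sum := (abs_sum_le_sum_abs (fun r =>
    discreteDeriv s (boolMonomial (((T α).erase t).erase r)) y) ((T α).erase t)).trans
      (sum_le_card_nsmul _ _ _ fun r _ => h_term r)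
  split_ifs at h_sum ⊢ with hs
  · rw [nsmul_eq_mul, mul_one] at h_sum
    gcongr
    exact h_sum.trans ((Nat.cast_le.2 (card_le_card (erase_subset _ _))).trans (hm α))
  · rw [nsmul_zero] at h_sum
    exact (mul_nonpos_of_nonneg_of_nonpos (abs_nonneg _) h_sum)

variable [Fintype I]

lemma sum_discreteDeriv_discreteDeriv_hamiltonian (t : I) :
    ∑ s ∈ univ.erase t, discreteDeriv t (discreteDeriv s (hamiltonian T c)) y =
      influence T c t y := by
  have h_second : ∀ s ∈ univ.erase t, discreteDeriv t (discreteDeriv s (hamiltonian T c)) y =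
      ∑ α with s ∈ T α ∧ t ∈ T α, c α * boolMonomial (((T α).erase t).erase s) y := fun s hs => by
    simp only [discreteDeriv_discreteDeriv_hamiltonian T c y (ne_of_mem_erase hs).symm,
      erase_right_comm]
  rw [sum_congr rfl h_second]
  simp only [influence, mul_sum]
  refine sum_comm' fun s α => ?_
  simp only [mem_filter, mem_univ, true_and, mem_erase, and_true]
  tauto

lemma sum_abs_coeff_mul_card_sub_one (s : I) :
    ∑ α with s ∈ T α, |c α| * (((T α).card : ℝ) - 1) =
      ∑ t ∈ univ.erase s, jointWeight T c s t := by
  have h_count : ∀ α ∈ ({α | s ∈ T α} : Finset A),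
      |c α| * (((T α).card : ℝ) - 1) = ∑ _ ∈ (T α).erase s, |c α| := fun α hα => by
    rw [sum_const, nsmul_eq_mul, cast_card_erase_of_mem (mem_filter.1 hα).2, mul_comm]
  rw [sum_congr rfl h_count]
  refine sum_comm' fun α _ => ?_
  simp only [mem_filter, mem_univ, true_and, mem_erase, and_true]
  tauto

lemma abs_sum_coeff_mul_sub_le {X Y : A → ℝ} {B : ℝ} (s : I)
    (hXY : ∀ α, s ∈ T α → |X α - Y α| ≤ ((T α).card - 1) * B) :
    |∑ α with s ∈ T α, c α * X α - ∑ α with s ∈ T α, c α * Y α| ≤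
      (∑ t ∈ univ.erase s, jointWeight T c s t) * B := by
  rw [← sum_abs_coeff_mul_card_sub_one, ← sum_sub_distrib, sum_mul]
  refine (abs_sum_le_sum_abs _ _).trans (sum_le_sum fun α hα => ?_)
  rw [← mul_sub, abs_mul, mul_assoc]
  exact mul_le_mul_of_nonneg_left (hXY α (mem_filter.1 hα).2) (abs_nonneg _)

end Hamiltonian

/-! ### Mean-field Gibbs measures -/

/-- Quantitative mean-field conditions on the multilinear Hamiltonian `∑_α c_α ∏_{t ∈ T_α} y_t`
under which its Gibbs measure is close to the product of Bernoulli(`p`) laws. The weights satisfy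
Dobrushin's condition with contraction factor `ρ`, no pair of coordinates interacts strongly, and
the local fields and total influences computed in the product law are `ε`-close to the constants
`θ` and `θ'`. For the ERGM, `ε` is of order `n ^ (-1/2)`, `θ = 2 Φ(p)` and `θ' = 2 Φ'(p)`. -/
structure IsDobrushinMeanField {I A : Type*} [DecidableEq I] [Fintype I] [Fintype A]
    (T : A → Finset I) (c : A → ℝ) (ρ ε m p θ θ' : ℝ) : Prop where
  rho_lt_one : ρ < 1
  one_le_m : 1 ≤ m
  sigmoid_eq : sigmoid θ = p
  one_le_mul_sqrt_card : 1 ≤ ε * √(Fintype.card I)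
  card_le (α : A) : ((T α).card : ℝ) ≤ m
  jointWeight_le (s t : I) (hts : t ≠ s) : jointWeight T c s t ≤ ε ^ 2
  sum_jointWeight_le (s : I) : ∑ t ∈ univ.erase s, jointWeight T c s t ≤ 4 * ρ
  first_order (s : I) : |∑ α with s ∈ T α, c α * p ^ ((T α).card - 1) - θ| ≤ ε
  second_order (s : I) :
    |∑ α with s ∈ T α, c α * (((T α).card - 1) * p ^ ((T α).card - 2)) - θ'| ≤ ε

namespace IsDobrushinMeanField

variable {I A : Type*} [DecidableEq I] [Fintype I] [Fintype A] {T : A → Finset I} {c : A → ℝ}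
  {ρ ε m p θ θ' : ℝ} (hD : IsDobrushinMeanField T c ρ ε m p θ θ')
include hD

lemma eps_pos : 0 < ε :=
  pos_of_mul_pos_left (zero_lt_one.trans_le hD.one_le_mul_sqrt_card) (sqrt_nonneg _)

lemma nonempty : Nonempty I := by
  by_contra h_empty
  rw [not_nonempty_iff] at h_empty
  have h_one_le := hD.one_le_mul_sqrt_card
  norm_num at h_one_le

lemma rho_nonneg : 0 ≤ ρ := by
  obtain ⟨s⟩ := hD.nonempty
  have h_sum_nonneg := sum_nonneg fun t (_ : t ∈ univ.erase s) => jointWeight_nonneg T c s t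
  linarith [hD.sum_jointWeight_le s]

lemma p_pos : 0 < p := hD.sigmoid_eq ▸ sigmoid_pos θ

lemma p_lt_one : p < 1 := hD.sigmoid_eq ▸ sigmoid_lt_one θ

lemma one_sub_rho_pos : 0 < 1 - ρ := sub_pos.2 hD.rho_lt_one

lemma le_div_one_sub_rho {x : ℝ} (hx : 0 ≤ x) : x ≤ x / (1 - ρ) :=
  le_div_self hx hD.one_sub_rho_pos (sub_le_self 1 hD.rho_nonneg)

lemma eps_le_div : ε ≤ ε / (1 - ρ) := hD.le_div_one_sub_rho hD.eps_pos.le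

lemma div_le_div_sq : ε / (1 - ρ) ≤ ε / (1 - ρ) ^ 2 := by
  rw [pow_two, ← div_div]
  exact hD.le_div_one_sub_rho (div_pos hD.eps_pos hD.one_sub_rho_pos).le

lemma eps_le_div_sq : ε ≤ ε / (1 - ρ) ^ 2 := hD.eps_le_div.trans hD.div_le_div_sq

lemma jointWeight_le_two_mul {s t : I} (hts : t ≠ s) : jointWeight T c s t ≤ 2 * ε := by
  have h_le_sum := single_le_sum (fun t _ => jointWeight_nonneg T c s t)
    (mem_erase.2 ⟨hts, mem_univ t⟩)
  refine le_of_sq_le_sq ?_ (mul_pos two_pos hD.eps_pos).le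
  nlinarith [jointWeight_nonneg T c s t, hD.jointWeight_le s t hts, hD.sum_jointWeight_le s,
    hD.rho_lt_one, sq_nonneg ε]

lemma sum_abs_discreteDeriv_condProb_le (t : I) (y : I → Bool) :
    ∑ s ∈ univ.erase t, |discreteDeriv t (condProb (hamiltonian T c) s) y| ≤ ρ := by
  refine (sum_le_sum fun s hs =>
    abs_discreteDeriv_condProb_le T c y (ne_of_mem_erase hs).symm).trans ?_
  simp only [← mul_sum, jointWeight_comm T c _ t]
  linarith [hD.sum_jointWeight_le t]

lemma sum_coordOsc_condProb_le (s : I) :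
    ∑ t, coordOsc t (condProb (hamiltonian T c) s) ≤ ρ := by
  have h_self : coordOsc s (condProb (hamiltonian T c) s) ≤ 0 :=
    coordOsc_le fun y => by rw [discreteDeriv_condProb_self, abs_zero]
  have h_other := sum_le_sum fun t (ht : t ∈ univ.erase s) =>
    coordOsc_le fun y => abs_discreteDeriv_condProb_le T c y (ne_of_mem_erase ht)
  rw [← mul_sum] at h_other
  rw [← add_sum_erase _ _ (mem_univ s)]
  linarith [hD.sum_jointWeight_le s]

lemma gibbsVar_le (F : (I → Bool) → ℝ) : gibbsVar (hamiltonian T c) F ≤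
    1 / (4 * (1 - ρ)) * ∑ s, gibbsMean (hamiltonian T c) (fun y => discreteDeriv s F y ^ 2) :=
  have := hD.nonempty
  gibbsVar_le_sum_of_sum_coordOsc_condProb_le _ _ hD.rho_lt_one hD.sum_coordOsc_condProb_le

lemma sqrt_gibbsVar_le {F : (I → Bool) → ℝ} {a : ℝ} (ha : 0 ≤ a)
    (hF : ∀ s, gibbsL2 (hamiltonian T c) (discreteDeriv s F) ≤ a) :
    √(gibbsVar (hamiltonian T c) F) ≤ a * √(Fintype.card I) / (2 * (1 - ρ)) := by
  have hr := hD.one_sub_rho_pos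
  have h_sum : ∑ s, gibbsMean (hamiltonian T c) (fun y => discreteDeriv s F y ^ 2) ≤
      Fintype.card I * a ^ 2 := by
    rw [← nsmul_eq_mul, ← card_univ]
    refine sum_le_card_nsmul _ _ _ fun s _ => ?_
    rw [← gibbsL2_sq]
    exact pow_le_pow_left₀ (gibbsL2_nonneg _ _) (hF s) 2
  refine sqrt_le_iff.2 ⟨by positivity, ?_⟩
  calc gibbsVar (hamiltonian T c) F ≤ 1 / (4 * (1 - ρ)) * (Fintype.card I * a ^ 2) :=
        (hD.gibbsVar_le F).trans (mul_le_mul_of_nonneg_left h_sum (by positivity))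
    _ ≤ 1 / (4 * (1 - ρ)) * (Fintype.card I * a ^ 2) / (1 - ρ) :=
        hD.le_div_one_sub_rho (by positivity)
    _ = _ := by
        rw [div_pow, mul_pow, sq_sqrt (Nat.cast_nonneg _)]
        field_simp
        ring

lemma sqrt_gibbsVar_le_of_abs_discreteDeriv_le {F : (I → Bool) → ℝ} {s : I} {B : ℝ} (hB : 0 ≤ B)
    (h_self : ∀ y, discreteDeriv s F y = 0)
    (h_other : ∀ t, t ≠ s → ∀ y, |discreteDeriv t F y| ≤ B * jointWeight T c s t) :
    √(gibbsVar (hamiltonian T c) F) ≤ B * (ε / (1 - ρ)) := by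
  have := hD.nonempty
  have hr := hD.one_sub_rho_pos
  have hε := hD.eps_pos
  have h_term (t : I) (ht : t ∈ univ.erase s) :
      gibbsMean (hamiltonian T c) (fun y => discreteDeriv t F y ^ 2) ≤
        B ^ 2 * ε ^ 2 * jointWeight T c s t := by
    have hts := ne_of_mem_erase ht
    refine gibbsMean_le_of_le _ fun y => ?_
    calc discreteDeriv t F y ^ 2 ≤ (B * jointWeight T c s t) ^ 2 :=
          sq_le_sq' (neg_le_of_abs_le (h_other t hts y)) (le_of_abs_le (h_other t hts y))
      _ = B ^ 2 * jointWeight T c s t * jointWeight T c s t := by ring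
      _ ≤ _ := by
          gcongr
          exacts [jointWeight_nonneg T c s t, hD.jointWeight_le s t hts]
  have h_sum : ∑ t, gibbsMean (hamiltonian T c) (fun y => discreteDeriv t F y ^ 2) ≤
      B ^ 2 * ε ^ 2 * (4 * ρ) := by
    rw [← add_sum_erase _ _ (mem_univ s)]
    simp only [h_self, ne_eq, OfNat.ofNat_ne_zero, not_false_eq_true, zero_pow, gibbsMean_const,
      zero_add]
    refine (sum_le_sum h_term).trans ?_
    rw [← mul_sum]
    gcongr
    exact hD.sum_jointWeight_le s
  refine sqrt_le_iff.2 ⟨by positivity, ?_⟩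
  calc gibbsVar (hamiltonian T c) F ≤ 1 / (4 * (1 - ρ)) * (B ^ 2 * ε ^ 2 * (4 * ρ)) :=
        (hD.gibbsVar_le F).trans (mul_le_mul_of_nonneg_left h_sum (by positivity))
    _ = B ^ 2 * ε ^ 2 / (1 - ρ) * ρ := by field_simp
    _ ≤ B ^ 2 * ε ^ 2 / (1 - ρ) * (1 / (1 - ρ)) := by
        gcongr
        exact hD.rho_lt_one.le.trans (hD.le_div_one_sub_rho zero_le_one)
    _ = _ := by field_simp

lemma sqrt_gibbsVar_discreteDeriv_hamiltonian_le (s : I) :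
    √(gibbsVar (hamiltonian T c) (discreteDeriv s (hamiltonian T c))) ≤ ε / (1 - ρ) := by
  simpa using hD.sqrt_gibbsVar_le_of_abs_discreteDeriv_le zero_le_one
    (discreteDeriv_discreteDeriv_self s (hamiltonian T c)) fun t hts y => by
      simpa using abs_discreteDeriv_discreteDeriv_hamiltonian_le T c y hts

lemma sqrt_gibbsVar_condProb_le (s : I) :
    √(gibbsVar (hamiltonian T c) (condProb (hamiltonian T c) s)) ≤ ε / (1 - ρ) := by
  have h_pos := div_pos hD.eps_pos hD.one_sub_rho_pos
  linarith [hD.sqrt_gibbsVar_le_of_abs_discreteDeriv_le (by norm_num : (0 : ℝ) ≤ 1 / 4)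
    (fun y => discreteDeriv_condProb_self y _ s)
    fun t hts y => abs_discreteDeriv_condProb_le T c y hts]

lemma abs_gibbsMean_boolMonomial_sub_prod_le (S : Finset I) :
    |gibbsMean (hamiltonian T c) (boolMonomial S) -
        ∏ t ∈ S, gibbsMean (hamiltonian T c) (boolMonomial {t})| ≤ S.card * (ε / (1 - ρ)) := by
  have := hD.nonempty
  induction S using Finset.induction_on with
  | empty => simp [boolMonomial_empty, gibbsMean_const]
  | insert s S hs ih =>
    set a := gibbsMean (hamiltonian T c) (boolMonomial {s})
    have ha : |a| ≤ 1 := (abs_gibbsMean_le _ _).trans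
      (gibbsMean_le_of_le _ (abs_boolMonomial_le_one {s}))
    have h_insert : |gibbsMean (hamiltonian T c) (boolMonomial (insert s S)) -
        a * gibbsMean (hamiltonian T c) (boolMonomial S)| ≤ ε / (1 - ρ) := by
      rw [gibbsMean_boolMonomial_insert_sub _ hs]
      refine (abs_gibbsMean_mul_le _ _ _).trans ?_
      refine (mul_le_of_le_one_right (gibbsL2_nonneg _ _) ?_).trans
        (hD.sqrt_gibbsVar_condProb_le s)
      simpa [gibbsL2_const] using
        gibbsL2_mono (hamiltonian T c) (G := fun _ => 1) (abs_boolMonomial_le_one S)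
    rw [prod_insert hs, card_insert_of_notMem hs, Nat.cast_succ, add_one_mul, add_comm]
    refine (abs_sub_le _ (a * gibbsMean (hamiltonian T c) (boolMonomial S)) _).trans
      (add_le_add h_insert ?_)
    rw [← mul_sub, abs_mul]
    exact (mul_le_of_le_one_left (abs_nonneg _) ha).trans ih

lemma abs_gibbsMean_boolMonomial_sub_pow_le {b : ℝ}
    (hb : ∀ s, |gibbsMean (hamiltonian T c) (boolMonomial {s}) - p| ≤ b) (S : Finset I) :
    |gibbsMean (hamiltonian T c) (boolMonomial S) - p ^ S.card| ≤
      S.card * (ε / (1 - ρ) + b) := by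
  have h_prod := abs_prod_sub_pow_le (fun t => gibbsMean_nonneg _ (boolMonomial_nonneg {t}))
    (fun t => gibbsMean_le_of_le _ (boolMonomial_le_one {t})) hD.p_pos.le hD.p_lt_one.le hb S
  rw [mul_add]
  exact (abs_sub_le _ _ _).trans
    (add_le_add (hD.abs_gibbsMean_boolMonomial_sub_prod_le S) h_prod)

lemma abs_gibbsMean_discreteDeriv_hamiltonian_sub_le {b : ℝ}
    (hb : ∀ s, |gibbsMean (hamiltonian T c) (boolMonomial {s}) - p| ≤ b) (s : I) :
    |gibbsMean (hamiltonian T c) (discreteDeriv s (hamiltonian T c)) - θ| ≤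
      4 * ρ * (ε / (1 - ρ) + b) + ε := by
  have h_pos := div_pos hD.eps_pos hD.one_sub_rho_pos
  have hb_nonneg : 0 ≤ b := (abs_nonneg _).trans (hb s)
  rw [funext fun y => discreteDeriv_hamiltonian T c y s, gibbsMean_sum]
  simp only [gibbsMean_const_mul]
  refine (abs_sub_le _ _ _).trans (add_le_add ((abs_sum_coeff_mul_sub_le T c s
    (B := ε / (1 - ρ) + b) fun α hs => ?_).trans ?_) (hD.first_order s))
  · have h_mono := hD.abs_gibbsMean_boolMonomial_sub_pow_le hb ((T α).erase s)
    rwa [cast_card_erase_of_mem hs, card_erase_of_mem hs] at h_mono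
  · gcongr
    exact hD.sum_jointWeight_le s

lemma abs_gibbsMean_boolMonomial_singleton_sub_le (s : I) :
    |gibbsMean (hamiltonian T c) (boolMonomial {s}) - p| ≤ 2 * (ε / (1 - ρ) ^ 2) := by
  have := hD.nonempty
  have hr := hD.one_sub_rho_pos
  have h_pos := div_pos hD.eps_pos hr
  obtain ⟨s₀, hs₀⟩ :=
    Finite.exists_max fun s : I => |gibbsMean (hamiltonian T c) (boolMonomial {s}) - p|
  refine (hs₀ s).trans ?_
  set b := |gibbsMean (hamiltonian T c) (boolMonomial {s₀}) - p|
  have h_field := gibbsL2_sub_const_le (hamiltonian T c) (discreteDeriv s₀ (hamiltonian T c)) θ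
  have h_field_var := hD.sqrt_gibbsVar_discreteDeriv_hamiltonian_le s₀
  have h_field_mean := hD.abs_gibbsMean_discreteDeriv_hamiltonian_sub_le hs₀ s₀
  have h_self : b ≤ 1 / 4 * (ε / (1 - ρ) + (4 * ρ * (ε / (1 - ρ) + b) + ε)) := by
    calc b = |gibbsMean (hamiltonian T c) (fun y => condProb (hamiltonian T c) s₀ y - p)| := by
          rw [gibbsMean_sub, gibbsMean_const, gibbsMean_condProb]
      _ ≤ gibbsMean (hamiltonian T c)
            (fun y => 1 / 4 * |discreteDeriv s₀ (hamiltonian T c) y - θ|) :=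
          (abs_gibbsMean_le _ _).trans (gibbsMean_mono _ fun y => by
            rw [← hD.sigmoid_eq]; exact abs_sigmoid_sub_le _ _)
      _ ≤ _ := by
          rw [gibbsMean_const_mul]
          gcongr
          exact (gibbsMean_abs_le_gibbsL2 _ _).trans
            (h_field.trans (add_le_add h_field_var h_field_mean))
  rw [pow_two, ← div_div, ← mul_div_assoc, le_div_iff₀ hr]
  nlinarith [hD.eps_le_div, hD.rho_nonneg, hD.rho_lt_one]

lemma abs_gibbsMean_boolMonomial_sub_pow_le_mul (S : Finset I) :
    |gibbsMean (hamiltonian T c) (boolMonomial S) - p ^ S.card| ≤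
      S.card * (3 * (ε / (1 - ρ) ^ 2)) := by
  refine (hD.abs_gibbsMean_boolMonomial_sub_pow_le
    hD.abs_gibbsMean_boolMonomial_singleton_sub_le S).trans ?_
  gcongr
  linarith [hD.div_le_div_sq]

lemma gibbsL2_discreteDeriv_hamiltonian_sub_le (s : I) :
    gibbsL2 (hamiltonian T c) (fun y => discreteDeriv s (hamiltonian T c) y - θ) ≤
      14 * (ε / (1 - ρ) ^ 2) := by
  have := hD.nonempty
  have h_mean := hD.abs_gibbsMean_discreteDeriv_hamiltonian_sub_le
    hD.abs_gibbsMean_boolMonomial_singleton_sub_le s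
  have h_rho : ρ * (ε / (1 - ρ) + 2 * (ε / (1 - ρ) ^ 2)) ≤
      ε / (1 - ρ) + 2 * (ε / (1 - ρ) ^ 2) :=
    mul_le_of_le_one_left (by linarith [hD.eps_pos, hD.eps_le_div, hD.div_le_div_sq])
      hD.rho_lt_one.le
  linarith [gibbsL2_sub_const_le (hamiltonian T c) (discreteDeriv s (hamiltonian T c)) θ,
    hD.sqrt_gibbsVar_discreteDeriv_hamiltonian_le s, hD.div_le_div_sq, hD.eps_le_div_sq]

lemma gibbsL2_condProb_sub_le (s : I) :
    gibbsL2 (hamiltonian T c) (fun y => condProb (hamiltonian T c) s y - p) ≤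
      4 * (ε / (1 - ρ) ^ 2) := by
  have h_lipschitz : gibbsL2 (hamiltonian T c) (fun y => condProb (hamiltonian T c) s y - p) ≤
      1 / 4 * gibbsL2 (hamiltonian T c) (fun y => discreteDeriv s (hamiltonian T c) y - θ) := by
    rw [← gibbsL2_abs _ fun y => _ - θ, ← gibbsL2_const_mul _ _ (by norm_num : (0 : ℝ) ≤ 1 / 4),
      ← hD.sigmoid_eq]
    exact gibbsL2_mono _ fun y => abs_sigmoid_sub_le _ _
  linarith [hD.gibbsL2_discreteDeriv_hamiltonian_sub_le s, hD.eps_le_div_sq, hD.eps_pos]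

lemma abs_gibbsMean_influence_sub_le (t : I) :
    |gibbsMean (hamiltonian T c) (influence T c t) - θ'| ≤ 13 * m * (ε / (1 - ρ) ^ 2) := by
  have hm := hD.one_le_m
  have h_nonneg : 0 ≤ ε / (1 - ρ) ^ 2 := hD.eps_pos.le.trans hD.eps_le_div_sq
  have h_coeff (α : A) (ht : t ∈ T α) :
      |∑ s ∈ (T α).erase t, gibbsMean (hamiltonian T c) (boolMonomial (((T α).erase t).erase s)) -
        ((T α).card - 1) * p ^ ((T α).card - 2)| ≤
      ((T α).card - 1) * (m * (3 * (ε / (1 - ρ) ^ 2))) := by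
    rw [← cast_card_erase_of_mem ht, ← nsmul_eq_mul, ← sum_const, ← sum_sub_distrib,
      ← nsmul_eq_mul]
    refine (abs_sum_le_sum_abs _ _).trans (sum_le_card_nsmul _ _ _ fun s hs => ?_)
    have h_card : (((T α).erase t).erase s).card = (T α).card - 2 := by
      rw [card_erase_of_mem hs, card_erase_of_mem ht, Nat.sub_sub]
    rw [← h_card]
    refine (hD.abs_gibbsMean_boolMonomial_sub_pow_le_mul _).trans ?_
    gcongr
    refine le_trans ?_ (hD.card_le α)
    exact_mod_cast card_le_card ((erase_subset _ _).trans (erase_subset _ _))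
  unfold influence
  simp only [gibbsMean_sum, gibbsMean_const_mul]
  refine (abs_sub_le _ _ _).trans ((add_le_add (abs_sum_coeff_mul_sub_le T c t h_coeff)
    (hD.second_order t)).trans ?_)
  have h_sum : ∑ s ∈ univ.erase t, jointWeight T c t s ≤ 4 := by
    linarith [hD.sum_jointWeight_le t, hD.rho_lt_one]
  nlinarith [mul_le_mul_of_nonneg_right h_sum (mul_nonneg (zero_le_one.trans hm) h_nonneg),
    mul_le_mul_of_nonneg_right hm h_nonneg, hD.eps_le_div_sq]

lemma gibbsL2_influence_sub_le (t : I) :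
    gibbsL2 (hamiltonian T c) (fun y => influence T c t y - θ') ≤
      14 * m * (ε / (1 - ρ) ^ 2) := by
  have := hD.nonempty
  have hm := zero_le_one.trans hD.one_le_m
  have h_var := hD.sqrt_gibbsVar_le_of_abs_discreteDeriv_le hm
    (fun y => discreteDeriv_influence_self T c y t)
    fun s _ y => abs_discreteDeriv_influence_le T c y hD.card_le s t
  linarith [gibbsL2_sub_const_le (hamiltonian T c) (influence T c t) θ',
    hD.abs_gibbsMean_influence_sub_le t, mul_le_mul_of_nonneg_left hD.div_le_div_sq hm]

end IsDobrushinMeanField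

/-! ### Linear regression of the conditional edge probabilities -/

section RegressionRemainder

variable {I : Type*} [DecidableEq I] [Fintype I] (h : (I → Bool) → ℝ) (a : ℝ)

/-- The part of `∑_s P(y_s = 1 | rest)` which is not explained by its linear regression with slope
`a` on the number `∑_s y_s` of present coordinates. -/
def regressionRemainder (y : I → Bool) : ℝ :=
  ∑ s, condProb h s y - a * ∑ s, boolMonomial {s} y

lemma discreteDeriv_regressionRemainder (t : I) (y : I → Bool) :
    discreteDeriv t (regressionRemainder h a) y =
      ∑ s ∈ univ.erase t, discreteDeriv t (condProb h s) y - a := by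
  calc discreteDeriv t (regressionRemainder h a) y =
        ∑ s, discreteDeriv t (condProb h s) y - a * ∑ s, discreteDeriv t (boolMonomial {s}) y := by
        simp only [discreteDeriv, regressionRemainder, sum_sub_distrib]
        ring
    _ = _ := by
        rw [← add_sum_erase _ _ (mem_univ t), discreteDeriv_condProb_self, zero_add,
          sum_discreteDeriv_boolMonomial_singleton, mul_one]

lemma gibbsMean_regressionRemainder_one : gibbsMean h (regressionRemainder h 1) = 0 := by
  unfold regressionRemainder
  simp only [one_mul, gibbsMean_sub, gibbsMean_sum, gibbsMean_condProb, sub_self]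

end RegressionRemainder

namespace IsDobrushinMeanField

variable {I A : Type*} [DecidableEq I] [Fintype I] [Fintype A] {T : A → Finset I} {c : A → ℝ}
  {ρ ε m p θ θ' : ℝ} (hD : IsDobrushinMeanField T c ρ ε m p θ θ')
include hD

lemma abs_discreteDeriv_condProb_sub_le {s t : I} (hts : t ≠ s) (y : I → Bool) :
    |discreteDeriv t (condProb (hamiltonian T c) s) y -
        p * (1 - p) * discreteDeriv t (discreteDeriv s (hamiltonian T c)) y| ≤
      jointWeight T c s t *
        (2 * |discreteDeriv s (hamiltonian T c) y - θ| + jointWeight T c s t) := by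
  set f := discreteDeriv s (hamiltonian T c)
  have h_diff : |f (Function.update y t true) - f (Function.update y t false)| ≤
      jointWeight T c s t := abs_discreteDeriv_discreteDeriv_hamiltonian_le T c y hts
  have h_near (b : Bool) : |f (Function.update y t true) - θ| + |f (Function.update y t false) - θ|
      ≤ 2 * |f (Function.update y t b) - θ| + jointWeight T c s t := by
    cases b
    · linarith [abs_sub_le (f (Function.update y t true)) (f (Function.update y t false)) θ]
    · rw [abs_sub_comm] at h_diff
      linarith [abs_sub_le (f (Function.update y t false)) (f (Function.update y t true)) θ]
  have h_linear := abs_sigmoid_sub_linear_le θ (f (Function.update y t true))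
    (f (Function.update y t false))
  rw [hD.sigmoid_eq] at h_linear
  refine h_linear.trans (mul_le_mul h_diff ?_ (by positivity) (jointWeight_nonneg T c s t))
  simpa only [Function.update_eq_self] using h_near (y t)

lemma abs_discreteDeriv_regressionRemainder_le (t : I) (y : I → Bool) :
    |discreteDeriv t (regressionRemainder (hamiltonian T c) (p * (1 - p) * θ')) y| ≤
      1 / 4 * |influence T c t y - θ'| + ∑ s ∈ univ.erase t, jointWeight T c s t *
        (2 * |discreteDeriv s (hamiltonian T c) y - θ| + jointWeight T c s t) := by
  have h_split : discreteDeriv t (regressionRemainder (hamiltonian T c) (p * (1 - p) * θ')) y =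
      p * (1 - p) * (influence T c t y - θ') + ∑ s ∈ univ.erase t,
        (discreteDeriv t (condProb (hamiltonian T c) s) y -
          p * (1 - p) * discreteDeriv t (discreteDeriv s (hamiltonian T c)) y) := by
    rw [discreteDeriv_regressionRemainder, sum_sub_distrib, ← mul_sum,
      sum_discreteDeriv_discreteDeriv_hamiltonian]
    ring
  rw [h_split]
  refine (abs_add_le _ _).trans (add_le_add ?_ ?_)
  · rw [abs_mul, abs_of_pos (mul_pos hD.p_pos (sub_pos.2 hD.p_lt_one))]
    gcongr
    nlinarith [sq_nonneg (p - 1 / 2)]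
  · exact (abs_sum_le_sum_abs _ _).trans (sum_le_sum fun s hs =>
      hD.abs_discreteDeriv_condProb_sub_le (ne_of_mem_erase hs).symm y)

lemma gibbsL2_linearization_error_le {s t : I} (hts : t ≠ s) :
    gibbsL2 (hamiltonian T c) (fun y =>
        2 * |discreteDeriv s (hamiltonian T c) y - θ| + jointWeight T c s t) ≤
      30 * (ε / (1 - ρ) ^ 2) := by
  have := hD.nonempty
  have h_add := gibbsL2_add_le (hamiltonian T c)
    (fun y => 2 * |discreteDeriv s (hamiltonian T c) y - θ|) fun _ => jointWeight T c s t
  rw [gibbsL2_const_mul _ _ zero_le_two, gibbsL2_abs, gibbsL2_const,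
    abs_of_nonneg (jointWeight_nonneg T c s t)] at h_add
  linarith [hD.gibbsL2_discreteDeriv_hamiltonian_sub_le s, hD.jointWeight_le_two_mul hts,
    hD.eps_le_div_sq]

lemma gibbsL2_discreteDeriv_regressionRemainder_le (t : I) :
    gibbsL2 (hamiltonian T c)
        (discreteDeriv t (regressionRemainder (hamiltonian T c) (p * (1 - p) * θ'))) ≤
      134 * m * (ε / (1 - ρ) ^ 2) := by
  have h_nonneg : 0 ≤ ε / (1 - ρ) ^ 2 := hD.eps_pos.le.trans hD.eps_le_div_sq
  have h_sum : ∑ s ∈ univ.erase t, jointWeight T c s t ≤ 4 := by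
    simp only [jointWeight_comm T c _ t]
    linarith [hD.sum_jointWeight_le t, hD.rho_lt_one]
  calc _ ≤ _ := gibbsL2_mono _ (hD.abs_discreteDeriv_regressionRemainder_le t)
    _ ≤ 1 / 4 * gibbsL2 (hamiltonian T c) (fun y => influence T c t y - θ') +
        ∑ s ∈ univ.erase t, jointWeight T c s t * gibbsL2 (hamiltonian T c) (fun y =>
          2 * |discreteDeriv s (hamiltonian T c) y - θ| + jointWeight T c s t) := by
        refine (gibbsL2_add_le _ _ _).trans (add_le_add ?_ ((gibbsL2_sum_le _ _ _).trans ?_))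
        · rw [gibbsL2_const_mul _ _ (by norm_num), gibbsL2_abs]
        · exact sum_le_sum fun s _ => (gibbsL2_const_mul _ _ (jointWeight_nonneg T c s t)).le
    _ ≤ 1 / 4 * (14 * m * (ε / (1 - ρ) ^ 2)) +
        ∑ s ∈ univ.erase t, jointWeight T c s t * (30 * (ε / (1 - ρ) ^ 2)) := by
        gcongr with s hs
        · exact hD.gibbsL2_influence_sub_le t
        · exact jointWeight_nonneg T c s t
        · exact hD.gibbsL2_linearization_error_le (ne_of_mem_erase hs).symm
    _ ≤ _ := by
        rw [← sum_mul]
        nlinarith [mul_le_mul_of_nonneg_right h_sum h_nonneg,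
          mul_le_mul_of_nonneg_right hD.one_le_m h_nonneg]

lemma sqrt_gibbsVar_regressionRemainder_le :
    √(gibbsVar (hamiltonian T c) (regressionRemainder (hamiltonian T c) (p * (1 - p) * θ'))) ≤
      67 * m / (1 - ρ) ^ 3 * ε * √(Fintype.card I) := by
  have hr := hD.one_sub_rho_pos
  have h_nonneg : 0 ≤ ε / (1 - ρ) ^ 2 := hD.eps_pos.le.trans hD.eps_le_div_sq
  have hm := zero_le_one.trans hD.one_le_m
  refine (hD.sqrt_gibbsVar_le (by positivity)
    hD.gibbsL2_discreteDeriv_regressionRemainder_le).trans_eq ?_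
  field_simp
  ring

lemma gibbsL2_regressionRemainder_one_le :
    gibbsL2 (hamiltonian T c) (regressionRemainder (hamiltonian T c) 1) ≤
      √(Fintype.card I) / (1 - ρ) := by
  have := hD.nonempty
  have h_deriv (t : I) :
      gibbsL2 (hamiltonian T c) (discreteDeriv t (regressionRemainder (hamiltonian T c) 1)) ≤
        2 := by
    refine (gibbsL2_mono _ (G := fun _ => 2) fun y => ?_).trans_eq (by norm_num [gibbsL2_const])
    rw [discreteDeriv_regressionRemainder]
    have h_sum := (abs_sum_le_sum_abs _ _).trans (hD.sum_abs_discreteDeriv_condProb_le t y)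
    have h_sub := abs_sub (∑ s ∈ univ.erase t, discreteDeriv t (condProb (hamiltonian T c) s) y) 1
    rw [abs_one] at h_sub
    linarith [hD.rho_lt_one]
  have h_var := hD.sqrt_gibbsVar_le zero_le_two h_deriv
  simp only [gibbsVar, gibbsMean_regressionRemainder_one, sub_zero] at h_var
  rwa [mul_div_mul_left _ _ two_ne_zero] at h_var

end IsDobrushinMeanField

/-! ### Stein's method for the number of present coordinates -/

section Stein

/-- A solution `f` of Stein's equation `f' x - x * f x = k x` which is bounded together with its
derivative by `B`. The function `g` plays the role of `f'` and is defined everywhere by the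
equation, although `f` may fail to be differentiable where `k` jumps. The increments of `f` are
controlled by a quadratic error, up to the increment of a bounded function `G` which absorbs the
jumps. -/
structure IsSteinSolution (k : ℝ → ℝ) (B : ℝ) (f g G : ℝ → ℝ) : Prop where
  eq : ∀ x, g x - x * f x = k x
  abs_f_le : ∀ x, |f x| ≤ B
  abs_g_le : ∀ x, |g x| ≤ B
  abs_G_le : ∀ x, |G x| ≤ B
  abs_increment_sub_le : ∀ d > 0, ∀ x w, x ≤ w → w ≤ x + d →
    |f (x + d) - f x - d * g w| ≤ d * (G (x + d) - G x) + B * d ^ 2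

section Cube

variable {I : Type*} [DecidableEq I] [Fintype I] (h : (I → Bool) → ℝ) (σ : ℝ)

/-- The number of present coordinates, centred under the Gibbs measure and divided by `σ`. -/
def standardizedSum (y : I → Bool) : ℝ :=
  (∑ s, boolMonomial {s} y - gibbsMean h (fun y => ∑ s, boolMonomial {s} y)) / σ

lemma standardizedSum_update_true (s : I) (y : I → Bool) :
    standardizedSum h σ (Function.update y s true) =
      standardizedSum h σ (Function.update y s false) + σ⁻¹ := by
  have h_sum : discreteDeriv s (fun y => ∑ t, boolMonomial {t} y) y = 1 := by
    rw [discreteDeriv_sum, sum_discreteDeriv_boolMonomial_singleton]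
  rw [discreteDeriv, sub_eq_iff_eq_add'] at h_sum
  rw [standardizedSum, standardizedSum, h_sum]
  ring

variable {σ} in
lemma mul_standardizedSum (hσ : σ ≠ 0) (a : ℝ) (y : I → Bool) :
    (1 - a) * σ * standardizedSum h σ y =
      regressionRemainder h a y - gibbsMean h (regressionRemainder h a) -
        regressionRemainder h 1 y := by
  have h_mean : gibbsMean h (regressionRemainder h a) =
      (1 - a) * gibbsMean h (fun y => ∑ s, boolMonomial {s} y) := by
    unfold regressionRemainder
    simp only [gibbsMean_sub, gibbsMean_const_mul, gibbsMean_sum, gibbsMean_condProb]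
    ring
  rw [h_mean, standardizedSum]
  unfold regressionRemainder
  field_simp
  ring

lemma gibbsMean_condProb_sub_boolMonomial_mul (s : I) (F : (I → Bool) → ℝ) :
    gibbsMean h (fun y => (condProb h s y - boolMonomial {s} y) * F y) =
      -gibbsMean h (fun y => condProb h s y * (1 - condProb h s y) * discreteDeriv s F y) := by
  rw [← gibbsMean_resample h s, neg_eq_neg_one_mul, ← gibbsMean_const_mul]
  congr 1
  ext y
  simp [resample, condProb_update, boolMonomial, discreteDeriv]
  ring

lemma gibbsMean_regressionRemainder_one_mul (F : (I → Bool) → ℝ) :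
    gibbsMean h (fun y => regressionRemainder h 1 y * F y) =
      -∑ s, gibbsMean h
        (fun y => condProb h s y * (1 - condProb h s y) * discreteDeriv s F y) := by
  simp only [regressionRemainder, one_mul, ← sum_sub_distrib, sum_mul, gibbsMean_sum,
    gibbsMean_condProb_sub_boolMonomial_mul, sum_neg_distrib]

variable {h σ} in
lemma gibbsMean_stein_eq (hσ : σ ≠ 0) {a P : ℝ} (ha : (1 - a) * σ = Fintype.card I * (P * σ⁻¹))
    (f g : ℝ → ℝ) :
    (1 - a) * σ * gibbsMean h (fun y =>
        g (standardizedSum h σ y) - standardizedSum h σ y * f (standardizedSum h σ y)) =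
      ∑ s, gibbsMean h (fun y =>
          (P - condProb h s y * (1 - condProb h s y)) * (σ⁻¹ * g (standardizedSum h σ y))) +
        ∑ s, gibbsMean h (fun y => condProb h s y * (1 - condProb h s y) *
          (σ⁻¹ * g (standardizedSum h σ y) -
            discreteDeriv s (fun y => f (standardizedSum h σ y)) y)) -
        gibbsMean h (fun y =>
          (regressionRemainder h a y - gibbsMean h (regressionRemainder h a)) *
            f (standardizedSum h σ y)) := by
  set W := standardizedSum h σ
  have h_exchange := gibbsMean_regressionRemainder_one_mul h fun y => f (W y)
  have h_pointwise : (fun y => (1 - a) * σ * (g (W y) - W y * f (W y))) = fun y =>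
      (∑ s, ((P - condProb h s y * (1 - condProb h s y)) * (σ⁻¹ * g (W y)) +
        condProb h s y * (1 - condProb h s y) * (σ⁻¹ * g (W y))) -
      (regressionRemainder h a y - gibbsMean h (regressionRemainder h a)) * f (W y)) +
        regressionRemainder h 1 y * f (W y) := by
    ext y
    have h_sum : ∑ s : I, ((P - condProb h s y * (1 - condProb h s y)) * (σ⁻¹ * g (W y)) +
        condProb h s y * (1 - condProb h s y) * (σ⁻¹ * g (W y))) = (1 - a) * σ * g (W y) := by
      simp only [← add_mul, sub_add_cancel, sum_const, card_univ, nsmul_eq_mul, ha]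
      ring
    rw [h_sum]
    linear_combination -f (W y) * mul_standardizedSum h hσ a y
  rw [← gibbsMean_const_mul, h_pointwise, gibbsMean_add, gibbsMean_sub, h_exchange]
  simp only [gibbsMean_sum, gibbsMean_add, mul_sub, gibbsMean_sub, sum_add_distrib,
    sum_sub_distrib]
  ring

variable {h σ} in
lemma IsSteinSolution.abs_sub_discreteDeriv_le {k f g G : ℝ → ℝ} {B : ℝ}
    (hk : IsSteinSolution k B f g G) (hσ : 0 < σ) (s : I) (y : I → Bool) :
    |σ⁻¹ * g (standardizedSum h σ y) - discreteDeriv s (fun y => f (standardizedSum h σ y)) y| ≤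
      σ⁻¹ * discreteDeriv s (fun y => G (standardizedSum h σ y)) y + B * σ⁻¹ ^ 2 := by
  have hδ := inv_pos.2 hσ
  have h_update (b : Bool) : standardizedSum h σ (Function.update y s false) ≤
        standardizedSum h σ (Function.update y s b) ∧
      standardizedSum h σ (Function.update y s b) ≤
        standardizedSum h σ (Function.update y s false) + σ⁻¹ := by
    cases b
    · exact ⟨le_rfl, by linarith⟩
    · exact ⟨by linarith [standardizedSum_update_true h σ s y],
        (standardizedSum_update_true h σ s y).le⟩
  have h_y := h_update (y s)
  rw [Function.update_eq_self] at h_y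
  rw [abs_sub_comm]
  simp only [discreteDeriv, standardizedSum_update_true]
  exact hk.abs_increment_sub_le _ hδ _ _ h_y.1 h_y.2

variable {h σ} in
lemma IsSteinSolution.abs_sum_gibbsMean_exchange_error_le {k f g G : ℝ → ℝ} {B : ℝ}
    (hk : IsSteinSolution k B f g G) (hσ : 0 < σ) :
    |∑ s, gibbsMean h (fun y => condProb h s y * (1 - condProb h s y) *
        (σ⁻¹ * g (standardizedSum h σ y) -
          discreteDeriv s (fun y => f (standardizedSum h σ y)) y))| ≤
      σ⁻¹ * (gibbsL2 h (regressionRemainder h 1) * B) + Fintype.card I * (B * σ⁻¹ ^ 2) := by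
  set W := standardizedSum h σ
  have hB := (abs_nonneg _).trans (hk.abs_f_le 0)
  have h_term (s : I) : |gibbsMean h (fun y => condProb h s y * (1 - condProb h s y) *
        (σ⁻¹ * g (W y) - discreteDeriv s (fun y => f (W y)) y))| ≤
      σ⁻¹ * gibbsMean h (fun y => condProb h s y * (1 - condProb h s y) *
        discreteDeriv s (fun y => G (W y)) y) + B * σ⁻¹ ^ 2 := by
    rw [← gibbsMean_const_mul, ← gibbsMean_const h (B * σ⁻¹ ^ 2), ← gibbsMean_add]
    refine (abs_gibbsMean_le h _).trans (gibbsMean_mono h fun y => ?_)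
    have h0 := condProb_nonneg h s y
    have h1 := condProb_le_one h s y
    have h_nonneg : 0 ≤ condProb h s y * (1 - condProb h s y) := mul_nonneg h0 (by linarith)
    rw [abs_mul, abs_of_nonneg h_nonneg]
    refine (mul_le_mul_of_nonneg_left (hk.abs_sub_discreteDeriv_le hσ s y) h_nonneg).trans ?_
    have h_le := mul_le_mul_of_nonneg_right (show condProb h s y * (1 - condProb h s y) ≤ 1 by
      nlinarith) (show 0 ≤ B * σ⁻¹ ^ 2 by positivity)
    linarith
  calc _ ≤ _ := (abs_sum_le_sum_abs _ _).trans (sum_le_sum fun s _ => h_term s)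
    _ = σ⁻¹ * -gibbsMean h (fun y => regressionRemainder h 1 y * G (W y)) +
        Fintype.card I * (B * σ⁻¹ ^ 2) := by
        rw [gibbsMean_regressionRemainder_one_mul, neg_neg, sum_add_distrib, ← mul_sum, sum_const,
          card_univ, nsmul_eq_mul]
    _ ≤ _ := by
        gcongr
        exact (neg_le_abs _).trans
          (abs_gibbsMean_mul_le_of_abs_le h _ fun y => hk.abs_G_le (W y))

end Cube

/-- The constant in the normal approximation of the standardized number of present coordinates
when the variance is `κ ^ 2` times the number of coordinates. -/
def steinConst (ρ m p κ : ℝ) : ℝ :=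
  (4 / (1 - ρ) ^ 2 + 1 / (1 - ρ) + 1 / κ + 67 * m * κ / (1 - ρ) ^ 3) / (p * (1 - p))

namespace IsDobrushinMeanField

variable {I A : Type*} [DecidableEq I] [Fintype I] [Fintype A] {T : A → Finset I} {c : A → ℝ}
  {ρ ε m p θ θ' κ : ℝ} (hD : IsDobrushinMeanField T c ρ ε m p θ θ')
include hD

lemma steinConst_pos (hκ : 0 < κ) : 0 < steinConst ρ m p κ := by
  have h1 := hD.one_sub_rho_pos
  have h2 := hD.p_pos
  have h3 := sub_pos.2 hD.p_lt_one
  have h4 := zero_lt_one.trans_le hD.one_le_m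
  unfold steinConst
  positivity

lemma abs_sum_gibbsMean_variance_error_le {F : (I → Bool) → ℝ} {B : ℝ} (hF : ∀ y, |F y| ≤ B) :
    |∑ s, gibbsMean (hamiltonian T c) (fun y => (p * (1 - p) -
        condProb (hamiltonian T c) s y * (1 - condProb (hamiltonian T c) s y)) * F y)| ≤
      Fintype.card I * (4 * (ε / (1 - ρ) ^ 2) * B) := by
  have hB := (abs_nonneg _).trans (hF fun _ => true)
  have h_term (s : I) : |gibbsMean (hamiltonian T c) (fun y => (p * (1 - p) -
      condProb (hamiltonian T c) s y * (1 - condProb (hamiltonian T c) s y)) * F y)| ≤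
      4 * (ε / (1 - ρ) ^ 2) * B := by
    refine (abs_gibbsMean_mul_le_of_abs_le _ _ hF).trans (mul_le_mul_of_nonneg_right ?_ hB)
    refine le_trans ?_ (hD.gibbsL2_condProb_sub_le s)
    rw [← gibbsL2_abs _ fun y => condProb (hamiltonian T c) s y - p]
    refine gibbsL2_mono _ fun y => ?_
    have h0 := condProb_nonneg (hamiltonian T c) s y
    have h1 := condProb_le_one (hamiltonian T c) s y
    rw [show ∀ q : ℝ, p * (1 - p) - q * (1 - q) = (q - p) * (q + p - 1) by intro q; ring, abs_mul]
    exact mul_le_of_le_one_right (abs_nonneg _)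
      (abs_le.2 ⟨by linarith [hD.p_pos], by linarith [hD.p_lt_one]⟩)
  refine (abs_sum_le_sum_abs _ _).trans ((sum_le_sum fun s _ => h_term s).trans_eq ?_)
  rw [sum_const, card_univ, nsmul_eq_mul]

lemma mul_abs_gibbsMean_standardizedSum_le {σ : ℝ} (hσ : 0 < σ)
    (h_slope : (1 - p * (1 - p) * θ') * σ = Fintype.card I * (p * (1 - p) * σ⁻¹))
    {k f g G : ℝ → ℝ} {B : ℝ} (hk : IsSteinSolution k B f g G) :
    Fintype.card I * (p * (1 - p) * σ⁻¹) *
        |gibbsMean (hamiltonian T c) (fun y => k (standardizedSum (hamiltonian T c) σ y))| ≤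
      Fintype.card I * (4 * (ε / (1 - ρ) ^ 2) * (σ⁻¹ * B)) +
        (σ⁻¹ * (√(Fintype.card I) / (1 - ρ) * B) + Fintype.card I * (B * σ⁻¹ ^ 2)) +
        67 * m / (1 - ρ) ^ 3 * ε * √(Fintype.card I) * B := by
  have := hD.nonempty
  have hδ := inv_pos.2 hσ
  have hB := (abs_nonneg _).trans (hk.abs_f_le 0)
  have h_scale : 0 ≤ Fintype.card I * (p * (1 - p) * σ⁻¹) :=
    mul_nonneg (Nat.cast_nonneg _)
      (mul_nonneg (mul_nonneg hD.p_pos.le (sub_nonneg.2 hD.p_lt_one.le)) hδ.le)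
  have h_eq := gibbsMean_stein_eq (h := hamiltonian T c) hσ.ne' h_slope f g
  simp only [hk.eq] at h_eq
  rw [← abs_of_nonneg h_scale, ← abs_mul, ← h_slope, h_eq]
  refine (abs_sub _ _).trans (add_le_add ((abs_add_le _ _).trans (add_le_add ?_ ?_)) ?_)
  · refine hD.abs_sum_gibbsMean_variance_error_le fun y => ?_
    rw [abs_mul, abs_of_pos hδ]
    exact mul_le_mul_of_nonneg_left (hk.abs_g_le _) hδ.le
  · refine (hk.abs_sum_gibbsMean_exchange_error_le hσ).trans ?_
    gcongr
    exact hD.gibbsL2_regressionRemainder_one_le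
  · refine (abs_gibbsMean_mul_le_of_abs_le _ _ fun y => hk.abs_f_le _).trans ?_
    gcongr
    exact hD.sqrt_gibbsVar_regressionRemainder_le

theorem abs_gibbsMean_standardizedSum_le (hκ : 0 < κ)
    (hκ_sq : κ ^ 2 * (1 - p * (1 - p) * θ') = p * (1 - p)) {k f g G : ℝ → ℝ} {B : ℝ}
    (hk : IsSteinSolution k B f g G) :
    |gibbsMean (hamiltonian T c) (fun y =>
        k (standardizedSum (hamiltonian T c) (κ * √(Fintype.card I)) y))| ≤
      B * steinConst ρ m p κ * ε := by
  have hr := hD.one_sub_rho_pos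
  have hp := hD.p_pos
  have hp' := sub_pos.2 hD.p_lt_one
  have hB := (abs_nonneg _).trans (hk.abs_f_le 0)
  have h_card : (Fintype.card I : ℝ) = √(Fintype.card I) ^ 2 := (sq_sqrt (Nat.cast_nonneg _)).symm
  have h_one_le := hD.one_le_mul_sqrt_card
  have hN : 0 < √(Fintype.card I : ℝ) :=
    (mul_pos_iff_of_pos_left hD.eps_pos).1 (zero_lt_one.trans_le h_one_le)
  have h_slope : (1 - p * (1 - p) * θ') * (κ * √(Fintype.card I)) =
      Fintype.card I * (p * (1 - p) * (κ * √(Fintype.card I))⁻¹) := by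
    rw [h_card, sqrt_sq hN.le]
    field_simp
    linear_combination hκ_sq
  have h_bound := hD.mul_abs_gibbsMean_standardizedSum_le (by positivity) h_slope hk
  set N := √(Fintype.card I : ℝ)
  rw [h_card] at h_bound
  refine le_of_mul_le_mul_left (h_bound.trans ?_)
    (show 0 < N ^ 2 * (p * (1 - p) * (κ * N)⁻¹) by positivity)
  calc _ = B * N * (4 / (1 - ρ) ^ 2 * ε / κ + (1 / (1 - ρ) + 1 / κ) / (κ * N) +
        67 * m / (1 - ρ) ^ 3 * ε) := by field_simp
    _ ≤ B * N * (4 / (1 - ρ) ^ 2 * ε / κ + (1 / (1 - ρ) + 1 / κ) * (ε * N) / (κ * N) +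
        67 * m / (1 - ρ) ^ 3 * ε) := by
        gcongr
        exact le_mul_of_one_le_right (by positivity) h_one_le
    _ = _ := by unfold steinConst; field_simp; ring

end IsDobrushinMeanField
end Stein

/-! ### Stein's equation for Lipschitz functions -/

section GaussTail

/-- `exp (x ^ 2 / 2)` times the integral of `k y * exp (-y ^ 2 / 2)` over `y > x`, written after
the substitution `y = x + u`. -/
def gaussTail (k : ℝ → ℝ) (x : ℝ) : ℝ :=
  ∫ u in Set.Ioi 0, k (x + u) * exp (-(x * u + u ^ 2 / 2))

/-- The moments of the weight `exp (-(x * u + u ^ 2 / 2))` on `u > 0`. For `j = 0` this is the Mills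
ratio of the standard normal distribution. -/
def millsMoment (j : ℕ) (x : ℝ) : ℝ :=
  ∫ u in Set.Ioi 0, u ^ j * exp (-(x * u + u ^ 2 / 2))

lemma gaussTail_one (x : ℝ) : gaussTail (fun _ => 1) x = millsMoment 0 x := by
  simp only [gaussTail, millsMoment, pow_zero]

lemma gaussTail_eq_exp_mul_setIntegral (k : ℝ → ℝ) (x : ℝ) :
    gaussTail k x = exp (x ^ 2 / 2) * ∫ y in Set.Ioi x, k y * exp (-y ^ 2 / 2) := by
  have h_shift := (measurePreserving_add_left volume x).setIntegral_preimage_emb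
    (measurableEmbedding_addLeft x) (fun y => k y * exp (-y ^ 2 / 2)) (Set.Ioi x)
  rw [Set.preimage_const_add_Ioi, sub_self] at h_shift
  rw [← h_shift, ← integral_const_mul, gaussTail]
  congr 1 with u
  rw [mul_left_comm, ← exp_add]
  ring_nf

lemma hasDerivAt_gaussTail {k : ℝ → ℝ} (hk : Continuous k)
    (hi : Integrable fun y => k y * exp (-y ^ 2 / 2)) (x : ℝ) :
    HasDerivAt (gaussTail k) (x * gaussTail k x - k x) x := by
  have h_eq : gaussTail k = fun x => exp (x ^ 2 / 2) *
      ((∫ y in Set.Ioi 0, k y * exp (-y ^ 2 / 2)) - ∫ y in 0..x, k y * exp (-y ^ 2 / 2)) := by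
    ext x
    rw [gaussTail_eq_exp_mul_setIntegral, ← intervalIntegral.integral_interval_add_Ioi (a := 0)
      (b := x) hi.integrableOn hi.integrableOn]
    ring
  have h_exp : HasDerivAt (fun x : ℝ => exp (x ^ 2 / 2)) (exp (x ^ 2 / 2) * x) x := by
    simpa using ((hasDerivAt_pow 2 x).div_const 2).exp
  have h_integral := (Continuous.integral_hasStrictDerivAt
    (f := fun y => k y * exp (-y ^ 2 / 2)) (by fun_prop) 0 x).hasDerivAt
  have h_cancel : exp (x ^ 2 / 2) * exp (-x ^ 2 / 2) = 1 := by
    rw [← exp_add, neg_div, add_neg_cancel, exp_zero]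
  rw [h_eq]
  refine (h_exp.mul (h_integral.const_sub _)).congr_deriv ?_
  linear_combination (-k x) * h_cancel

lemma gaussTail_comp_neg {k : ℝ → ℝ} (hi : Integrable fun y => k y * exp (-y ^ 2 / 2)) (x : ℝ) :
    gaussTail (fun y => k (-y)) (-x) =
      exp (x ^ 2 / 2) * (∫ y, k y * exp (-y ^ 2 / 2)) - gaussTail k x := by
  have h_neg := integral_comp_neg_Ioi (-x) (fun y => k y * exp (-y ^ 2 / 2))
  simp only [neg_neg, neg_sq] at h_neg
  rw [gaussTail_eq_exp_mul_setIntegral, gaussTail_eq_exp_mul_setIntegral, neg_sq, h_neg,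
    ← intervalIntegral.integral_Iic_add_Ioi (b := x) hi.integrableOn hi.integrableOn]
  ring

lemma pow_mul_exp_le (j : ℕ) (x : ℝ) {u : ℝ} (hu : 0 ≤ u) :
    u ^ j * exp (-(x * u + u ^ 2 / 2)) ≤
      j.factorial * exp ((1 - x) ^ 2) * exp (-(1 / 4) * u ^ 2) := by
  have h_pow := Real.pow_div_factorial_le_exp u hu j
  rw [div_le_iff₀ (by positivity)] at h_pow
  calc _ ≤ exp u * j.factorial * exp (-(x * u + u ^ 2 / 2)) := by gcongr
    _ = j.factorial * exp (u - (x * u + u ^ 2 / 2)) := by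
        rw [sub_eq_add_neg u, exp_add]; ring
    _ ≤ j.factorial * exp ((1 - x) ^ 2 + -(1 / 4) * u ^ 2) := by
        gcongr
        nlinarith [sq_nonneg ((1 - x) - u / 2)]
    _ = _ := by rw [exp_add]; ring

lemma integrableOn_pow_mul_exp (j : ℕ) (x : ℝ) :
    IntegrableOn (fun u => u ^ j * exp (-(x * u + u ^ 2 / 2))) (Set.Ioi 0) := by
  refine Integrable.mono' ((integrable_exp_neg_mul_sq (b := 1 / 4) (by norm_num)).const_mul
    (j.factorial * exp ((1 - x) ^ 2))).integrableOn (by fun_prop) ?_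
  filter_upwards [ae_restrict_mem measurableSet_Ioi] with u hu
  have hu' : 0 ≤ u := le_of_lt hu
  rw [norm_of_nonneg (by positivity)]
  exact pow_mul_exp_le j x hu'

lemma millsMoment_nonneg (j : ℕ) (x : ℝ) : 0 ≤ millsMoment j x :=
  setIntegral_nonneg measurableSet_Ioi fun _ hu =>
    mul_nonneg (pow_nonneg (le_of_lt hu) j) (exp_nonneg _)

lemma millsMoment_antitone (j : ℕ) : Antitone (millsMoment j) := fun x x' hx =>
  setIntegral_mono_on (integrableOn_pow_mul_exp j x') (integrableOn_pow_mul_exp j x)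
    measurableSet_Ioi fun u hu => by
      have hu : 0 ≤ u := le_of_lt hu
      gcongr

lemma hasDerivAt_exp_neg_mul_add_sq_half (x u : ℝ) :
    HasDerivAt (fun u => exp (-(x * u + u ^ 2 / 2)))
      (-((x + u) * exp (-(x * u + u ^ 2 / 2)))) u := by
  refine (((hasDerivAt_id u).const_mul x).add
    ((hasDerivAt_pow 2 u).div_const 2)).neg.exp.congr_deriv ?_
  simp
  ring

lemma mul_millsMoment_zero_add (x : ℝ) : x * millsMoment 0 x + millsMoment 1 x = 1 := by
  have h_deriv (u : ℝ) : HasDerivAt (fun u => -exp (-(x * u + u ^ 2 / 2)))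
      (x * (u ^ 0 * exp (-(x * u + u ^ 2 / 2))) + u ^ 1 * exp (-(x * u + u ^ 2 / 2))) u :=
    (hasDerivAt_exp_neg_mul_add_sq_half x u).neg.congr_deriv (by ring)
  have h_int := ((integrableOn_pow_mul_exp 0 x).const_mul x).add (integrableOn_pow_mul_exp 1 x)
  have h_lim := tendsto_zero_of_hasDerivAt_of_integrableOn_Ioi (fun u _ => h_deriv u) h_int
    (by simpa using (integrableOn_pow_mul_exp 0 x).neg)
  have h_parts := integral_Ioi_of_hasDerivAt_of_tendsto' (fun u _ => h_deriv u) h_int h_lim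
  rw [integral_add ((integrableOn_pow_mul_exp 0 x).const_mul x) (integrableOn_pow_mul_exp 1 x),
    integral_const_mul] at h_parts
  simpa [millsMoment] using h_parts

lemma mul_millsMoment_succ_add (j : ℕ) (x : ℝ) :
    x * millsMoment (j + 1) x + millsMoment (j + 2) x = (j + 1) * millsMoment j x := by
  have h_deriv (u : ℝ) : HasDerivAt (fun u => -(u ^ (j + 1) * exp (-(x * u + u ^ 2 / 2))))
      (x * (u ^ (j + 1) * exp (-(x * u + u ^ 2 / 2))) +
        u ^ (j + 2) * exp (-(x * u + u ^ 2 / 2)) -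
        (j + 1) * (u ^ j * exp (-(x * u + u ^ 2 / 2)))) u := by
    refine ((hasDerivAt_pow (j + 1) u).mul
      (hasDerivAt_exp_neg_mul_add_sq_half x u)).neg.congr_deriv ?_
    push_cast
    ring
  have h_int₁ := (integrableOn_pow_mul_exp (j + 1) x).const_mul x
  have h_int₂ : IntegrableOn (fun u => x * (u ^ (j + 1) * exp (-(x * u + u ^ 2 / 2))) +
      u ^ (j + 2) * exp (-(x * u + u ^ 2 / 2))) (Set.Ioi 0) :=
    h_int₁.add (integrableOn_pow_mul_exp (j + 2) x)
  have h_int₃ := (integrableOn_pow_mul_exp j x).const_mul (j + 1)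
  have h_lim := tendsto_zero_of_hasDerivAt_of_integrableOn_Ioi (fun u _ => h_deriv u)
    (h_int₂.sub h_int₃) (integrableOn_pow_mul_exp (j + 1) x).neg
  have h_parts := integral_Ioi_of_hasDerivAt_of_tendsto' (fun u _ => h_deriv u)
    (h_int₂.sub h_int₃) h_lim
  rw [integral_sub h_int₂ h_int₃, integral_add h_int₁ (integrableOn_pow_mul_exp (j + 2) x),
    integral_const_mul, integral_const_mul] at h_parts
  simpa [millsMoment, sub_eq_zero] using h_parts

lemma integrable_exp_neg_sq_half : Integrable fun y : ℝ => exp (-y ^ 2 / 2) := by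
  convert integrable_exp_neg_mul_sq (b := 1 / 2) (by norm_num) using 3
  ring

lemma hasDerivAt_millsMoment_zero (x : ℝ) :
    HasDerivAt (millsMoment 0) (x * millsMoment 0 x - 1) x := by
  have h_tail := hasDerivAt_gaussTail (k := fun _ => 1) continuous_const
    (by simpa using integrable_exp_neg_sq_half) x
  rwa [gaussTail_one, funext gaussTail_one] at h_tail

lemma mul_millsMoment_zero_mono : Monotone fun x => x * millsMoment 0 x := fun x x' hx => by
  linarith [mul_millsMoment_zero_add x, mul_millsMoment_zero_add x', millsMoment_antitone 1 hx]

lemma mul_millsMoment_zero_le_one (x : ℝ) : x * millsMoment 0 x ≤ 1 := by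
  linarith [mul_millsMoment_zero_add x, millsMoment_nonneg 1 x]

lemma mul_millsMoment_one_le (x : ℝ) : x * millsMoment 1 x ≤ millsMoment 0 x := by
  have h_parts := mul_millsMoment_succ_add 0 x
  norm_num at h_parts
  linarith [millsMoment_nonneg 2 x]

lemma millsMoment_one_le_one {x : ℝ} (hx : 0 ≤ x) : millsMoment 1 x ≤ 1 := by
  linarith [mul_millsMoment_zero_add x, mul_nonneg hx (millsMoment_nonneg 0 x)]

lemma millsMoment_zero_le_two {x : ℝ} (hx : 0 ≤ x) : millsMoment 0 x ≤ 2 := by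
  have h_zero : millsMoment 0 0 = √(π / (1 / 2)) / 2 := by
    rw [← integral_gaussian_Ioi, millsMoment]
    congr 1 with u
    rw [pow_zero, one_mul]
    ring_nf
  refine (millsMoment_antitone 0 hx).trans ?_
  rw [h_zero, div_le_iff₀ two_pos, sqrt_le_left (by norm_num)]
  linarith [pi_le_four]

lemma integral_gaussianReal_zero_one (k : ℝ → ℝ) :
    ∫ z, k z ∂(gaussianReal 0 1) = (√(2 * π))⁻¹ * ∫ y, k y * exp (-y ^ 2 / 2) := by
  rw [integral_gaussianReal_eq_integral_smul one_ne_zero, ← integral_const_mul]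
  congr 1 with y
  simp [gaussianPDFReal]
  ring

lemma gaussianReal_zero_one_toReal (s : Set ℝ) :
    ((gaussianReal 0 1) s).toReal = (√(2 * π))⁻¹ * ∫ y in s, exp (-y ^ 2 / 2) := by
  rw [gaussianReal_apply_eq_integral _ one_ne_zero, ENNReal.toReal_ofReal
    (integral_nonneg fun y => gaussianPDFReal_nonneg _ _ _), ← integral_const_mul]
  simp [gaussianPDFReal]

end GaussTail

section Lipschitz

variable {k : ℝ → ℝ}

lemma abs_gaussTail_sub_mul_millsMoment_le (hk : LipschitzWith 1 k) (x : ℝ) :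
    |gaussTail k x - k x * millsMoment 0 x| ≤ millsMoment 1 x := by
  have h_const : IntegrableOn (fun u => k x * exp (-(x * u + u ^ 2 / 2))) (Set.Ioi 0) := by
    have h_pow := (integrableOn_pow_mul_exp 0 x).const_mul (k x)
    simp only [pow_zero, one_mul] at h_pow
    exact h_pow
  have h_bound : ∀ᵐ u ∂volume.restrict (Set.Ioi 0),
      ‖(k (x + u) - k x) * exp (-(x * u + u ^ 2 / 2))‖ ≤
        u ^ 1 * exp (-(x * u + u ^ 2 / 2)) := by
    filter_upwards [ae_restrict_mem measurableSet_Ioi] with u hu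
    have h_dist := hk.dist_le_mul (x + u) x
    rw [Real.dist_eq, Real.dist_eq, NNReal.coe_one, one_mul, add_sub_cancel_left,
      abs_of_pos (Set.mem_Ioi.1 hu)] at h_dist
    rw [norm_mul, Real.norm_eq_abs, Real.norm_eq_abs, abs_exp, pow_one]
    gcongr
  have hc := hk.continuous
  have h_diff : IntegrableOn (fun u => (k (x + u) - k x) * exp (-(x * u + u ^ 2 / 2)))
      (Set.Ioi 0) := Integrable.mono' (integrableOn_pow_mul_exp 1 x) (by fun_prop) h_bound
  have h_split : gaussTail k x - k x * millsMoment 0 x =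
      ∫ u in Set.Ioi 0, (k (x + u) - k x) * exp (-(x * u + u ^ 2 / 2)) := by
    rw [sub_eq_iff_eq_add, millsMoment, ← integral_const_mul]
    simp only [pow_zero, one_mul]
    rw [← integral_add h_diff h_const, gaussTail]
    congr 1 with u
    ring
  rw [h_split, ← Real.norm_eq_abs]
  exact norm_integral_le_of_norm_le (integrableOn_pow_mul_exp 1 x) h_bound

lemma abs_gaussTail_le_of_nonneg (hk : LipschitzWith 1 k) {x : ℝ} (hx : 0 ≤ x)
    (hkx : |k x| ≤ |x| + 1) : |gaussTail k x| ≤ 3 := by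
  rw [abs_of_nonneg hx] at hkx
  have h_abs : |k x * millsMoment 0 x| ≤ (x + 1) * millsMoment 0 x := by
    rw [abs_mul, abs_of_nonneg (millsMoment_nonneg 0 x)]
    exact mul_le_mul_of_nonneg_right hkx (millsMoment_nonneg 0 x)
  have h_tri := abs_sub_abs_le_abs_sub (gaussTail k x) (k x * millsMoment 0 x)
  linarith [abs_gaussTail_sub_mul_millsMoment_le hk x, mul_millsMoment_zero_add x,
    millsMoment_zero_le_two hx]

lemma abs_mul_gaussTail_sub_le_of_nonneg (hk : LipschitzWith 1 k) {x : ℝ} (hx : 0 ≤ x)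
    (hkx : |k x| ≤ |x| + 1) :
    |x * gaussTail k x - k x| ≤ 2 * (x * millsMoment 1 x) + millsMoment 1 x := by
  rw [abs_of_nonneg hx] at hkx
  have h_eq : x * gaussTail k x - k x =
      x * (gaussTail k x - k x * millsMoment 0 x) - k x * millsMoment 1 x := by
    linear_combination k x * mul_millsMoment_zero_add x
  rw [h_eq]
  refine (abs_sub _ _).trans ?_
  rw [abs_mul, abs_mul, abs_of_nonneg hx, abs_of_nonneg (millsMoment_nonneg 1 x)]
  linarith [mul_le_mul_of_nonneg_left (abs_gaussTail_sub_mul_millsMoment_le hk x) hx,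
    mul_le_mul_of_nonneg_right hkx (millsMoment_nonneg 1 x)]

lemma gaussTail_bounds_of_nonneg (hk : LipschitzWith 1 k) {x : ℝ} (hx : 0 ≤ x)
    (hkx : |k x| ≤ |x| + 1) :
    |gaussTail k x| ≤ 3 ∧ |x * gaussTail k x - k x| ≤ 5 ∧
      |x * (x * gaussTail k x - k x)| ≤ 4 := by
  have h_le := abs_mul_gaussTail_sub_le_of_nonneg hk hx hkx
  have h_zero := millsMoment_zero_le_two hx
  have h_one := mul_millsMoment_one_le x
  refine ⟨abs_gaussTail_le_of_nonneg hk hx hkx, ?_, ?_⟩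
  · linarith [millsMoment_one_le_one hx]
  · rw [abs_mul, abs_of_nonneg hx]
    linarith [mul_le_mul_of_nonneg_left h_le hx, mul_le_mul_of_nonneg_left h_one hx,
      mul_millsMoment_zero_le_one x]

lemma integrable_mul_exp_of_lipschitzWith (hk : LipschitzWith 1 k) :
    Integrable fun y => k y * exp (-y ^ 2 / 2) := by
  have h_id : Integrable fun y : ℝ => y * exp (-y ^ 2 / 2) := by
    convert integrable_mul_exp_neg_mul_sq (b := 1 / 2) (by norm_num) using 4
    ring
  have hc := hk.continuous
  refine Integrable.mono' (h_id.abs.add (integrable_exp_neg_sq_half.const_mul |k 0|))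
    (by fun_prop) (Filter.Eventually.of_forall fun y => ?_)
  have h_dist := hk.dist_le_mul y 0
  rw [Real.dist_eq, Real.dist_eq, NNReal.coe_one, one_mul, sub_zero] at h_dist
  simp only [Pi.add_apply]
  rw [Real.norm_eq_abs, abs_mul, abs_mul, abs_exp, ← add_mul]
  gcongr
  linarith [abs_sub_abs_le_abs_sub (k y) (k 0)]

lemma gaussTail_bounds (hk : LipschitzWith 1 k) (hk_le : ∀ x, |k x| ≤ |x| + 1)
    (hk_zero : ∫ z, k z ∂(gaussianReal 0 1) = 0) (x : ℝ) :
    |gaussTail k x| ≤ 3 ∧ |x * gaussTail k x - k x| ≤ 5 ∧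
      |x * (x * gaussTail k x - k x)| ≤ 4 := by
  rcases le_total 0 x with hx | hx
  · exact gaussTail_bounds_of_nonneg hk hx (hk_le x)
  · rw [integral_gaussianReal_zero_one, mul_eq_zero_iff_left (by positivity)] at hk_zero
    have h_reflect : gaussTail k x = -gaussTail (fun y => k (-y)) (-x) := by
      rw [gaussTail_comp_neg (integrable_mul_exp_of_lipschitzWith hk), hk_zero, mul_zero, zero_sub,
        neg_neg]
    have h_bounds := gaussTail_bounds_of_nonneg (k := fun y => k (-y))
      (LipschitzWith.of_dist_le_mul fun y z => by
        simpa only [dist_neg_neg] using hk.dist_le_mul (-y) (-z))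
      (neg_nonneg.2 hx) (by simpa using hk_le x)
    rw [neg_neg] at h_bounds
    rwa [h_reflect, abs_neg, mul_neg, ← neg_mul, ← abs_neg (x * _), ← neg_mul]

lemma abs_mul_gaussTail_sub_sub_le (hk : LipschitzWith 1 k) (hk_le : ∀ x, |k x| ≤ |x| + 1)
    (hk_zero : ∫ z, k z ∂(gaussianReal 0 1) = 0) (x y : ℝ) :
    |(x * gaussTail k x - k x) - (y * gaussTail k y - k y)| ≤ 8 * |x - y| := by
  have h_deriv (x : ℝ) : HasDerivAt (fun x => x * gaussTail k x)
      (gaussTail k x + x * (x * gaussTail k x - k x)) x :=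
    ((hasDerivAt_id x).mul (hasDerivAt_gaussTail hk.continuous
      (integrable_mul_exp_of_lipschitzWith hk) x)).congr_deriv (by simp)
  have h_mul : ‖x * gaussTail k x - y * gaussTail k y‖ ≤ 7 * ‖x - y‖ := by
    refine Convex.norm_image_sub_le_of_norm_hasDerivWithin_le
      (fun x _ => (h_deriv x).hasDerivWithinAt) (fun x _ => ?_) convex_univ (Set.mem_univ y)
      (Set.mem_univ x)
    obtain ⟨h_tail, -, h_mul_deriv⟩ := gaussTail_bounds hk hk_le hk_zero x
    linarith [norm_add_le (gaussTail k x) (x * (x * gaussTail k x - k x)),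
      Real.norm_eq_abs (gaussTail k x), Real.norm_eq_abs (x * (x * gaussTail k x - k x))]
  have h_dist := hk.dist_le_mul x y
  simp only [Real.dist_eq, NNReal.coe_one, one_mul, Real.norm_eq_abs] at h_dist h_mul
  rw [sub_sub_sub_comm]
  linarith [abs_sub (x * gaussTail k x - y * gaussTail k y) (k x - k y)]

lemma abs_gaussTail_increment_sub_le (hk : LipschitzWith 1 k) (hk_le : ∀ x, |k x| ≤ |x| + 1)
    (hk_zero : ∫ z, k z ∂(gaussianReal 0 1) = 0) {d x w : ℝ} (hd : 0 < d) (hxw : x ≤ w)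
    (hwx : w ≤ x + d) :
    |gaussTail k (x + d) - gaussTail k x - d * (w * gaussTail k w - k w)| ≤ 8 * d ^ 2 := by
  set γ := w * gaussTail k w - k w
  have h_deriv (t : ℝ) : HasDerivAt (fun t => gaussTail k t - γ * t)
      (t * gaussTail k t - k t - γ) t :=
    ((hasDerivAt_gaussTail hk.continuous (integrable_mul_exp_of_lipschitzWith hk) t).sub
      ((hasDerivAt_id t).const_mul γ)).congr_deriv (by simp)
  have h_mean := Convex.norm_image_sub_le_of_norm_hasDerivWithin_le (C := 8 * d)
    (fun t _ => (h_deriv t).hasDerivWithinAt) (fun t ht => ?_) (convex_Icc x (x + d))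
    (Set.left_mem_Icc.2 (by linarith)) (Set.right_mem_Icc.2 (by linarith))
  · simp only [Real.norm_eq_abs, add_sub_cancel_left, abs_of_pos hd] at h_mean
    calc _ = _ := by congr 1; ring
      _ ≤ _ := h_mean
      _ = _ := by ring
  · refine (abs_mul_gaussTail_sub_sub_le hk hk_le hk_zero t w).trans ?_
    gcongr
    exact abs_le.2 ⟨by linarith [ht.1], by linarith [ht.2]⟩

lemma isSteinSolution_neg_gaussTail (hk : LipschitzWith 1 k) (hk_le : ∀ x, |k x| ≤ |x| + 1)
    (hk_zero : ∫ z, k z ∂(gaussianReal 0 1) = 0) :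
    IsSteinSolution k 8 (fun x => -gaussTail k x) (fun x => -(x * gaussTail k x - k x))
      fun _ => 0 where
  eq x := by ring
  abs_f_le x := by linarith [abs_neg (gaussTail k x), (gaussTail_bounds hk hk_le hk_zero x).1]
  abs_g_le x := by
    linarith [abs_neg (x * gaussTail k x - k x), (gaussTail_bounds hk hk_le hk_zero x).2.1]
  abs_G_le _ := by norm_num
  abs_increment_sub_le d hd x w hxw hwx := by
    rw [← abs_neg, sub_zero, mul_zero, zero_add]
    convert abs_gaussTail_increment_sub_le hk hk_le hk_zero hd hxw hwx using 2
    ring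

lemma integrable_gaussianReal_of_lipschitzWith (hk : LipschitzWith 1 k) :
    Integrable k (gaussianReal 0 1) := by
  have h_id : Integrable (fun z : ℝ => z) (gaussianReal 0 1) :=
    memLp_one_iff_integrable.1 (memLp_id_gaussianReal' 1 (by simp))
  refine Integrable.mono' (h_id.abs.add (integrable_const |k 0|))
    hk.continuous.aestronglyMeasurable (Filter.Eventually.of_forall fun z => ?_)
  have h_dist := hk.dist_le_mul z 0
  rw [Real.dist_eq, Real.dist_eq, NNReal.coe_one, one_mul, sub_zero] at h_dist
  simp only [Pi.add_apply, Real.norm_eq_abs]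
  linarith [abs_sub_abs_le_abs_sub (k z) (k 0)]

lemma abs_sub_integral_gaussianReal_le (hk : LipschitzWith 1 k) (x : ℝ) :
    |k x - ∫ z, k z ∂(gaussianReal 0 1)| ≤ |x| + 1 := by
  have h_sq : Integrable (fun z : ℝ => z ^ 2) (gaussianReal 0 1) :=
    (memLp_id_gaussianReal' 2 (by simp)).integrable_sq
  have h_second_moment : ∫ z, z ^ 2 ∂(gaussianReal 0 1) = 1 := by
    have h_var := variance_fun_id_gaussianReal (μ := 0) (v := 1)
    rw [variance_of_integral_eq_zero (by fun_prop) (by simp)] at h_var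
    simpa using h_var
  have h_half : Integrable (fun z : ℝ => (1 + z ^ 2) / 2) (gaussianReal 0 1) :=
    ((integrable_const 1).add h_sq).div_const 2
  have h_le (z : ℝ) : ‖k x - k z‖ ≤ |x| + (1 + z ^ 2) / 2 := by
    have h_dist := hk.dist_le_mul x z
    rw [Real.dist_eq, Real.dist_eq, NNReal.coe_one, one_mul] at h_dist
    rw [Real.norm_eq_abs]
    linarith [abs_sub x z, two_mul_le_add_sq 1 |z|, sq_abs z]
  have h_int : ∫ z, (|x| + (1 + z ^ 2) / 2) ∂(gaussianReal 0 1) = |x| + 1 := by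
    rw [integral_add (integrable_const _) h_half, integral_div,
      integral_add (integrable_const _) h_sq, h_second_moment]
    simp
  calc |k x - ∫ z, k z ∂(gaussianReal 0 1)| = ‖∫ z, (k x - k z) ∂(gaussianReal 0 1)‖ := by
        rw [integral_sub (integrable_const _) (integrable_gaussianReal_of_lipschitzWith hk),
          Real.norm_eq_abs]
        simp
    _ ≤ ∫ z, (|x| + (1 + z ^ 2) / 2) ∂(gaussianReal 0 1) :=
        norm_integral_le_of_norm_le ((integrable_const _).add h_half)
          (Filter.Eventually.of_forall h_le)
    _ = |x| + 1 := h_int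

theorem exists_isSteinSolution_of_lipschitzWith (hk : LipschitzWith 1 k) :
    ∃ f g G, IsSteinSolution (fun x => k x - ∫ z, k z ∂(gaussianReal 0 1)) 8 f g G := by
  refine ⟨_, _, _, isSteinSolution_neg_gaussTail ?_ (abs_sub_integral_gaussianReal_le hk) ?_⟩
  · exact LipschitzWith.of_dist_le_mul fun x y => by
      simpa only [dist_sub_right] using hk.dist_le_mul x y
  · rw [integral_sub (integrable_gaussianReal_of_lipschitzWith hk) (integrable_const _)]
    simp

end Lipschitz

/-! ### Stein's equation for half-lines -/

section Indicator

/-- The bounded solution of Stein's equation for the indicator function of `(-∞, z]`. -/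
def indicatorSteinSolution (z x : ℝ) : ℝ :=
  if x ≤ z then (1 - cdf (gaussianReal 0 1) z) * millsMoment 0 (-x)
  else cdf (gaussianReal 0 1) z * millsMoment 0 x

lemma one_sub_cdf_mul_millsMoment_neg (z : ℝ) :
    (1 - cdf (gaussianReal 0 1) z) * millsMoment 0 (-z) =
      cdf (gaussianReal 0 1) z * millsMoment 0 z := by
  have h_int : Integrable fun y : ℝ => (1 : ℝ) * exp (-y ^ 2 / 2) := by
    simpa only [one_mul] using integrable_exp_neg_sq_half
  have h_total := integral_gaussianReal_zero_one fun _ => 1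
  simp only [integral_const, probReal_univ, smul_eq_mul, mul_one] at h_total
  have h_reflect := gaussTail_comp_neg h_int z
  have h_tail := gaussTail_eq_exp_mul_setIntegral (fun _ => 1) z
  have h_split := intervalIntegral.integral_Iic_add_Ioi (b := z) h_int.integrableOn
    h_int.integrableOn
  simp only [gaussTail_one] at h_reflect h_tail
  simp only [one_mul] at h_total h_reflect h_tail h_split
  rw [← h_split] at h_total h_reflect
  rw [cdf_eq_real, measureReal_def, gaussianReal_zero_one_toReal, h_reflect, h_tail]
  linear_combination (exp (z ^ 2 / 2) * ∫ y in Set.Iic z, exp (-y ^ 2 / 2)) * h_total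

variable {x z : ℝ}

lemma indicatorSteinSolution_of_le (h : x ≤ z) :
    indicatorSteinSolution z x = (1 - cdf (gaussianReal 0 1) z) * millsMoment 0 (-x) :=
  if_pos h

lemma indicatorSteinSolution_of_ge (h : z ≤ x) :
    indicatorSteinSolution z x = cdf (gaussianReal 0 1) z * millsMoment 0 x := by
  rcases h.lt_or_eq with h | rfl
  · exact if_neg h.not_ge
  · rw [indicatorSteinSolution_of_le le_rfl, one_sub_cdf_mul_millsMoment_neg]

lemma continuous_indicatorSteinSolution (z : ℝ) : Continuous (indicatorSteinSolution z) := by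
  have h_mills : Continuous (millsMoment 0) :=
    continuous_iff_continuousAt.2 fun x => (hasDerivAt_millsMoment_zero x).continuousAt
  refine Continuous.if_le (by fun_prop) (by fun_prop) continuous_id continuous_const ?_
  rintro x rfl
  exact one_sub_cdf_mul_millsMoment_neg _

/-- The right derivative at the jump `x = z` is the value to the right of `z`, hence the strict
inequality in the indicator. -/
lemma hasDerivWithinAt_indicatorSteinSolution (z x : ℝ) :
    HasDerivWithinAt (indicatorSteinSolution z) (x * indicatorSteinSolution z x +
      (if x < z then 1 else 0) - cdf (gaussianReal 0 1) z) (Set.Ici x) x := by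
  split_ifs with h
  · refine HasDerivAt.hasDerivWithinAt ?_
    have h_deriv := ((hasDerivAt_millsMoment_zero (-x)).comp x (hasDerivAt_neg x)).const_mul
      (1 - cdf (gaussianReal 0 1) z)
    refine (h_deriv.congr_deriv ?_).congr_of_eventuallyEq ?_
    · rw [indicatorSteinSolution_of_le h.le]
      ring
    · filter_upwards [Iio_mem_nhds h] with y hy
      exact indicatorSteinSolution_of_le (le_of_lt hy)
  · rw [not_lt] at h
    have h_deriv := ((hasDerivAt_millsMoment_zero x).const_mul
      (cdf (gaussianReal 0 1) z)).hasDerivWithinAt (s := Set.Ici x)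
    refine (h_deriv.congr_deriv ?_).congr (fun y hy => indicatorSteinSolution_of_ge (h.trans hy))
      (indicatorSteinSolution_of_ge h)
    rw [indicatorSteinSolution_of_ge h]
    ring

lemma monotone_mul_indicatorSteinSolution (z : ℝ) :
    Monotone fun x => x * indicatorSteinSolution z x := by
  have h_left : MonotoneOn (fun x => x * indicatorSteinSolution z x) (Set.Iic z) :=
    fun x hx y hy hxy => by
      have h_mills := mul_le_mul_of_nonneg_left (mul_millsMoment_zero_mono (neg_le_neg hxy))
        (sub_nonneg.2 (cdf_le_one (gaussianReal 0 1) z))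
      simp only at h_mills ⊢
      rw [indicatorSteinSolution_of_le hx, indicatorSteinSolution_of_le hy]
      linarith
  have h_right : MonotoneOn (fun x => x * indicatorSteinSolution z x) (Set.Ici z) :=
    fun x hx y hy hxy => by
      have h_mills := mul_le_mul_of_nonneg_left (mul_millsMoment_zero_mono hxy)
        (cdf_nonneg (gaussianReal 0 1) z)
      simp only at h_mills ⊢
      rw [indicatorSteinSolution_of_ge hx, indicatorSteinSolution_of_ge hy]
      linarith
  exact h_left.Iic_union_Ici h_right

lemma abs_mul_indicatorSteinSolution_le_one (z x : ℝ) : |x * indicatorSteinSolution z x| ≤ 1 := by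
  have h_left (x : ℝ) (hx : x ≤ z) : -1 ≤ x * indicatorSteinSolution z x := by
    rw [indicatorSteinSolution_of_le hx]
    linarith [mul_le_mul_of_nonneg_left (mul_millsMoment_zero_le_one (-x))
      (sub_nonneg.2 (cdf_le_one (gaussianReal 0 1) z)), cdf_nonneg (gaussianReal 0 1) z]
  have h_right (x : ℝ) (hx : z ≤ x) : x * indicatorSteinSolution z x ≤ 1 := by
    rw [indicatorSteinSolution_of_ge hx]
    linarith [mul_le_mul_of_nonneg_left (mul_millsMoment_zero_le_one x)
      (cdf_nonneg (gaussianReal 0 1) z), cdf_le_one (gaussianReal 0 1) z]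
  have h_mono := monotone_mul_indicatorSteinSolution z
  rcases le_total x z with hx | hx
  · exact abs_le.2 ⟨h_left x hx, (h_mono hx).trans (h_right z le_rfl)⟩
  · exact abs_le.2 ⟨(h_left z le_rfl).trans (h_mono hx), h_right x hx⟩

lemma indicatorSteinSolution_nonneg (z x : ℝ) : 0 ≤ indicatorSteinSolution z x := by
  rw [indicatorSteinSolution]
  split_ifs
  · exact mul_nonneg (sub_nonneg.2 (cdf_le_one _ z)) (millsMoment_nonneg 0 _)
  · exact mul_nonneg (cdf_nonneg _ z) (millsMoment_nonneg 0 _)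

lemma indicatorSteinSolution_le_self (z x : ℝ) :
    indicatorSteinSolution z x ≤ indicatorSteinSolution z z := by
  rcases le_total x z with hx | hx
  · rw [indicatorSteinSolution_of_le hx, indicatorSteinSolution_of_le le_rfl]
    exact mul_le_mul_of_nonneg_left (millsMoment_antitone 0 (neg_le_neg hx))
      (sub_nonneg.2 (cdf_le_one _ z))
  · rw [indicatorSteinSolution_of_ge hx, indicatorSteinSolution_of_ge le_rfl]
    exact mul_le_mul_of_nonneg_left (millsMoment_antitone 0 hx) (cdf_nonneg _ z)

lemma abs_indicatorSteinSolution_le_two (z x : ℝ) : |indicatorSteinSolution z x| ≤ 2 := by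
  rw [abs_of_nonneg (indicatorSteinSolution_nonneg z x)]
  refine (indicatorSteinSolution_le_self z x).trans ?_
  rcases le_total 0 z with hz | hz
  · rw [indicatorSteinSolution_of_ge le_rfl]
    exact (mul_le_of_le_one_left (millsMoment_nonneg _ _) (cdf_le_one _ z)).trans
      (millsMoment_zero_le_two hz)
  · rw [indicatorSteinSolution_of_le le_rfl]
    exact (mul_le_of_le_one_left (millsMoment_nonneg _ _)
      (sub_le_self _ (cdf_nonneg _ z))).trans (millsMoment_zero_le_two (neg_nonneg.2 hz))

lemma abs_indicatorSteinSolution_increment_sub_le {d w : ℝ} (hxw : x ≤ w)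
    (hwx : w ≤ x + d) :
    |indicatorSteinSolution z (x + d) - indicatorSteinSolution z x -
        d * (w * indicatorSteinSolution z w + (if w ≤ z then 1 else 0) -
          cdf (gaussianReal 0 1) z)| ≤
      d * (((x + d) * indicatorSteinSolution z (x + d) - if x + d ≤ z then 1 else 0) -
        (x * indicatorSteinSolution z x - if x ≤ z then 1 else 0)) := by
  set γ := w * indicatorSteinSolution z w + (if w ≤ z then 1 else 0) - cdf (gaussianReal 0 1) z
    with hγ
  have h_linear (t : ℝ) : HasDerivAt (fun t => γ * t) γ t := by
    simpa using (hasDerivAt_id t).const_mul γ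
  have h_mean := norm_image_sub_le_of_norm_deriv_right_le_segment
    (f := fun t => indicatorSteinSolution z t - γ * t) (a := x) (b := x + d)
    (C := ((x + d) * indicatorSteinSolution z (x + d) - if x + d ≤ z then 1 else 0) -
      (x * indicatorSteinSolution z x - if x ≤ z then 1 else 0))
    ((continuous_indicatorSteinSolution z).sub (by fun_prop)).continuousOn
    (fun t _ => (hasDerivWithinAt_indicatorSteinSolution z t).sub (h_linear t).hasDerivWithinAt)
    (fun t ht => ?_) (x + d) (Set.right_mem_Icc.2 (hxw.trans hwx))
  · rw [Real.norm_eq_abs, add_sub_cancel_left] at h_mean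
    calc _ = _ := by congr 1; ring
      _ ≤ _ := h_mean
      _ = _ := mul_comm _ _
  · have h_mono := monotone_mul_indicatorSteinSolution z
    have h_left := h_mono ht.1
    have h_right := h_mono ht.2.le
    have h_left' := h_mono hxw
    have h_right' := h_mono hwx
    have hxt := ht.1
    have htx := ht.2
    simp only at h_left h_right h_left' h_right'
    rw [Real.norm_eq_abs, hγ, abs_le]
    constructor <;> split_ifs <;> linarith

theorem isSteinSolution_indicatorSteinSolution (z : ℝ) :
    IsSteinSolution (fun x => (if x ≤ z then 1 else 0) - cdf (gaussianReal 0 1) z) 8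
      (indicatorSteinSolution z)
      (fun x => x * indicatorSteinSolution z x + (if x ≤ z then 1 else 0) -
        cdf (gaussianReal 0 1) z)
      (fun x => x * indicatorSteinSolution z x - if x ≤ z then 1 else 0) := by
  have h_abs (x : ℝ) := abs_le.1 (abs_mul_indicatorSteinSolution_le_one z x)
  have h_cdf := cdf_nonneg (gaussianReal 0 1) z
  have h_cdf' := cdf_le_one (gaussianReal 0 1) z
  refine ⟨fun x => by ring, fun x => ?_, fun x => ?_, fun x => ?_, fun d _ x w hxw hwx => ?_⟩
  · linarith [abs_indicatorSteinSolution_le_two z x]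
  · rw [abs_le]
    constructor <;> split_ifs <;> linarith [h_abs x]
  · rw [abs_le]
    constructor <;> split_ifs <;> linarith [h_abs x]
  · exact (abs_indicatorSteinSolution_increment_sub_le hxw hwx).trans
      (le_add_of_nonneg_right (by positivity))

end Indicator

/-! ### Counting embeddings -/

section Embeddings

variable {V W : Type*} [Fintype V] [Fintype W]

lemma card_embedding_eqOn_le [DecidableEq V] [DecidableEq W] (S : Finset V) (g : V → W) :
    #{φ : V ↪ W | ∀ x ∈ S, φ x = g x} ≤ Fintype.card W ^ (Fintype.card V - #S) := by
  calc #{φ : V ↪ W | ∀ x ∈ S, φ x = g x}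
      ≤ #(Fintype.piFinset fun x => if x ∈ S then {g x} else (univ : Finset W)) := by
        refine card_le_card_of_injOn (fun φ => ⇑φ) (fun φ hφ => ?_) DFunLike.coe_injective.injOn
        rw [mem_coe, mem_filter] at hφ
        rw [mem_coe, Fintype.mem_piFinset]
        intro x
        split_ifs with hx
        · exact mem_singleton.2 (hφ.2 x hx)
        · exact mem_univ _
    _ = Fintype.card W ^ (Fintype.card V - #S) := by
        simp only [Fintype.card_piFinset, apply_ite card, card_singleton, card_univ]
        rw [prod_ite, prod_const_one, one_mul, prod_const, ← card_compl]
        congr 2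
        ext
        simp

lemma card_embedding_eq_eq_eq_mul_le [DecidableEq W] {a b c : W} (hab : a ≠ b) (hac : a ≠ c)
    (hbc : b ≠ c) (x y z : V) :
    #{φ : V ↪ W | φ x = a ∧ φ y = b ∧ φ z = c} * Fintype.card W ^ 3 ≤
      Fintype.card W ^ Fintype.card V := by
  classical
  rcases ({φ : V ↪ W | φ x = a ∧ φ y = b ∧ φ z = c} : Finset _).eq_empty_or_nonempty with
    h_empty | ⟨φ, hφ⟩
  · simp only [h_empty, card_empty, zero_mul, zero_le]
  · obtain ⟨rfl, rfl, rfl⟩ := (mem_filter.1 hφ).2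
    have h_three : #{x, y, z} = 3 := card_eq_three.2
      ⟨x, y, z, fun h => hab (h ▸ rfl), fun h => hac (h ▸ rfl), fun h => hbc (h ▸ rfl), rfl⟩
    have h_card : 3 ≤ Fintype.card V := h_three ▸ card_le_univ _
    have h_le := card_embedding_eqOn_le {x, y, z} φ
    simp only [h_three, mem_insert, mem_singleton, forall_eq_or_imp, forall_eq] at h_le
    calc _ ≤ Fintype.card W ^ (Fintype.card V - 3) * Fintype.card W ^ 3 :=
          Nat.mul_le_mul_right _ h_le
      _ = _ := by rw [← pow_add, Nat.sub_add_cancel h_card]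

lemma card_embedding_eq_eq_congr [DecidableEq W] {a b a' b' : W} (hab : a ≠ b) (hab' : a' ≠ b')
    (x y : V) :
    #{φ : V ↪ W | φ x = a ∧ φ y = b} = #{φ : V ↪ W | φ x = a' ∧ φ y = b'} := by
  obtain ⟨σ, rfl, rfl⟩ : ∃ σ : Equiv.Perm W, σ a = a' ∧ σ b = b' := by
    have h_ne : a' ≠ Equiv.swap a a' b := fun h =>
      hab ((Equiv.swap a a').injective ((Equiv.swap_apply_left a a').trans h))
    refine ⟨(Equiv.swap a a').trans (Equiv.swap (Equiv.swap a a' b) b'), ?_, ?_⟩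
    · rw [Equiv.trans_apply, Equiv.swap_apply_left, Equiv.swap_apply_of_ne_of_ne h_ne hab']
    · rw [Equiv.trans_apply, Equiv.swap_apply_left]
  refine card_bij' (fun φ _ => φ.trans σ.toEmbedding) (fun φ _ => φ.trans σ.symm.toEmbedding)
    ?_ ?_ ?_ ?_ <;> simp +contextual [Function.Embedding.ext_iff]

lemma card_embedding_eq_eq [DecidableEq W] {a b : W} (hab : a ≠ b) {x y : V} (hxy : x ≠ y) :
    #{φ : V ↪ W | φ x = a ∧ φ y = b} =
      (Fintype.card W - 2).descFactorial (Fintype.card V - 2) := by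
  classical
  obtain ⟨w, hw⟩ := Nat.exists_eq_add_of_le' (card_pair hab ▸ card_le_univ {a, b})
  obtain ⟨v, hv⟩ := Nat.exists_eq_add_of_le' (card_pair hxy ▸ card_le_univ {x, y})
  have h_fibers : #(univ : Finset (V ↪ W)) =
      ∑ q ∈ (univ : Finset W).offDiag, #{φ : V ↪ W | (φ x, φ y) = q} :=
    card_eq_sum_card_fiberwise fun φ _ => by simp [hxy]
  have h_fiber (q) (hq : q ∈ (univ : Finset W).offDiag) :
      #{φ : V ↪ W | (φ x, φ y) = q} = #{φ : V ↪ W | φ x = a ∧ φ y = b} := by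
    rw [card_embedding_eq_eq_congr hab (mem_offDiag.1 hq).2.2]
    simp only [Prod.ext_iff]
  have h_offDiag : (w + 2) * (w + 2) - (w + 2) = (w + 1 + 1) * (w + 1) := by
    rw [← Nat.mul_sub_one]
    rfl
  rw [sum_congr rfl h_fiber, sum_const, offDiag_card, card_univ, card_univ,
    Fintype.card_embedding_eq, smul_eq_mul, hw, hv, h_offDiag, Nat.succ_descFactorial_succ,
    Nat.succ_descFactorial_succ, ← mul_assoc] at h_fibers
  rw [hw, hv, Nat.add_sub_cancel, Nat.add_sub_cancel]
  exact (Nat.eq_of_mul_eq_mul_left (by positivity) h_fibers).symm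

end Embeddings

section DescFactorial

variable {n : ℕ}

lemma descFactorial_sub_two_div_pow_le_one (n r : ℕ) :
    ((n - 2).descFactorial r : ℝ) / (n : ℝ) ^ r ≤ 1 := by
  refine div_le_one_of_le₀ ?_ (by positivity)
  exact_mod_cast (Nat.descFactorial_le_pow _ _).trans (Nat.pow_le_pow_left (Nat.sub_le _ _) _)

lemma one_sub_le_descFactorial_sub_two_div_pow (hn : n ≠ 0) (r : ℕ) :
    1 - ((r : ℝ) + 2) ^ 2 / n ≤ ((n - 2).descFactorial r : ℝ) / (n : ℝ) ^ r := by
  have hn₀ : (0 : ℝ) < n := by positivity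
  induction r with
  | zero => simpa using div_nonneg (sq_nonneg (2 : ℝ)) hn₀.le
  | succ r ih =>
    have h_le_one := descFactorial_sub_two_div_pow_le_one n r
    have h_nonneg : 0 ≤ ((n - 2).descFactorial r : ℝ) / (n : ℝ) ^ r := by positivity
    have h_factor : (n : ℝ) - (r + 2) ≤ ((n - 2 - r : ℕ) : ℝ) := by
      rw [sub_le_iff_le_add]
      exact_mod_cast (by omega : n ≤ n - 2 - r + (r + 2))
    set D := ((n - 2).descFactorial r : ℝ) / (n : ℝ) ^ r with hD
    calc 1 - (((r + 1 : ℕ) : ℝ) + 2) ^ 2 / n ≤ 1 - ((r : ℝ) + 2) ^ 2 / n - (r + 2) / n := by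
          rw [sub_sub, ← add_div]
          gcongr
          push_cast
          nlinarith [Nat.cast_nonneg (α := ℝ) r]
      _ ≤ D - D * ((r + 2) / n) := by
          gcongr
          exact mul_le_of_le_one_left (by positivity) h_le_one
      _ = ((n : ℝ) - (r + 2)) / n * D := by field_simp
      _ ≤ ((n - 2 - r : ℕ) : ℝ) / n * D := by gcongr
      _ = _ := by
          rw [hD, Nat.descFactorial_succ, Nat.cast_mul, pow_succ', div_mul_div_comm]

lemma zpow_two_sub_natCast (x : ℝ) {w : ℕ} (hw : 2 ≤ w) :
    x ^ ((2 : ℤ) - w) = (x ^ (w - 2))⁻¹ := by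
  rw [show (2 : ℤ) - w = -((w - 2 : ℕ) : ℤ) by omega, zpow_neg, zpow_natCast]

lemma descFactorial_sub_two_mul_zpow_le_one (n : ℕ) {w : ℕ} (hw : 2 ≤ w) :
    ((n - 2).descFactorial (w - 2) : ℝ) * (n : ℝ) ^ ((2 : ℤ) - w) ≤ 1 := by
  rw [zpow_two_sub_natCast _ hw, ← div_eq_mul_inv]
  exact descFactorial_sub_two_div_pow_le_one _ _

lemma abs_descFactorial_sub_two_mul_zpow_sub_one_le (hn : n ≠ 0) {w : ℕ} (hw : 2 ≤ w) :
    |((n - 2).descFactorial (w - 2) : ℝ) * (n : ℝ) ^ ((2 : ℤ) - w) - 1| ≤ (w : ℝ) ^ 2 / n := by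
  have h_lower := one_sub_le_descFactorial_sub_two_div_pow hn (w - 2)
  rw [Nat.cast_sub hw, Nat.cast_two, sub_add_cancel, div_eq_mul_inv (_ : ℝ) (_ ^ _),
    ← zpow_two_sub_natCast _ hw] at h_lower
  have h_nonneg : 0 ≤ (w : ℝ) ^ 2 / n := by positivity
  rw [abs_le]
  constructor <;> linarith [descFactorial_sub_two_mul_zpow_le_one n hw]

end DescFactorial

section EdgeImage

variable {V : Type} [Fintype V] {n : ℕ} (H : SimpleGraph V)

open Classical in
/-- The image in `EdgeIdx n` of the edge set of `H` under an embedding of its vertices. -/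
def edgeImage (φ : V ↪ Fin n) : Finset (EdgeIdx n) :=
  {t | ∃ a b, H.Adj a b ∧ φ a = t.1.1 ∧ φ b = t.1.2}

lemma mem_edgeImage {φ : V ↪ Fin n} {t : EdgeIdx n} :
    t ∈ edgeImage H φ ↔ ∃ a b, H.Adj a b ∧ φ a = t.1.1 ∧ φ b = t.1.2 := by
  simp only [edgeImage, mem_filter, mem_univ, true_and]

lemma injective_sym2_mk_edgeIdx : Function.Injective fun t : EdgeIdx n => s(t.1.1, t.1.2) := by
  rintro ⟨⟨a, b⟩, hab⟩ ⟨⟨a', b'⟩, hab'⟩ h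
  rcases Sym2.eq_iff.1 h with ⟨rfl, rfl⟩ | ⟨rfl, rfl⟩
  · rfl
  · exact absurd hab (lt_asymm hab')

lemma card_edgeImage (φ : V ↪ Fin n) : #(edgeImage H φ) = eCount H := by
  classical
  rw [eCount, Nat.card_eq_fintype_card, ← Set.toFinset_card,
    ← card_image_of_injective _ injective_sym2_mk_edgeIdx,
    ← card_image_of_injective _ (Sym2.map.injective φ.injective)]
  congr 1
  ext e
  simp only [mem_image, Set.mem_toFinset]
  constructor
  · rintro ⟨t, ht, rfl⟩
    obtain ⟨a, b, hab, ha, hb⟩ := (mem_edgeImage H).1 ht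
    exact ⟨s(a, b), hab, by rw [Sym2.map_mk, ha, hb]⟩
  · rintro ⟨e, he, rfl⟩
    induction e with | _ a b
    have hab : H.Adj a b := he
    rcases lt_or_gt_of_ne (φ.injective.ne hab.ne) with h | h
    · exact ⟨⟨(φ a, φ b), h⟩, (mem_edgeImage H).2 ⟨a, b, hab, rfl, rfl⟩, rfl⟩
    · exact ⟨⟨(φ b, φ a), h⟩, (mem_edgeImage H).2 ⟨b, a, hab.symm, rfl, rfl⟩, Sym2.eq_swap⟩

lemma forall_mem_edgeImage_iff (φ : V ↪ Fin n) (y : EdgeIdx n → Bool) :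
    (∀ t ∈ edgeImage H φ, y t = true) ↔ ∀ a b, H.Adj a b → yAdj y (φ a) (φ b) = true := by
  constructor
  · intro h a b hab
    unfold yAdj
    split_ifs with h_lt h_gt
    · exact h _ ((mem_edgeImage H).2 ⟨a, b, hab, rfl, rfl⟩)
    · exact h _ ((mem_edgeImage H).2 ⟨b, a, hab.symm, rfl, rfl⟩)
    · exact absurd (φ.injective (le_antisymm (not_lt.1 h_gt) (not_lt.1 h_lt))) hab.ne
  · rintro h ⟨⟨x, z⟩, hxz⟩ ht
    obtain ⟨a, b, hab, rfl, rfl⟩ := (mem_edgeImage H).1 ht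
    simpa only [yAdj, dif_pos hxz] using h a b hab

lemma homCount_eq_sum_boolMonomial (y : EdgeIdx n → Bool) :
    (homCount H y : ℝ) = ∑ φ : V ↪ Fin n, boolMonomial (edgeImage H φ) y := by
  classical
  have h_monomial (φ : V ↪ Fin n) : boolMonomial (edgeImage H φ) y =
      if ∀ a b, H.Adj a b → yAdj y (φ a) (φ b) = true then 1 else 0 := by
    rw [boolMonomial, prod_boole]
    simp only [forall_mem_edgeImage_iff]
  simp_rw [h_monomial, sum_boole]
  rw [homCount, ← Fintype.card_subtype, ← Nat.card_eq_fintype_card]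
  congr 1
  exact Nat.card_congr
    { toFun := fun φ => ⟨⟨φ.1, φ.2.1⟩, φ.2.2⟩
      invFun := fun φ => ⟨φ.1, φ.1.injective, φ.2⟩
      left_inv := fun _ => rfl
      right_inv := fun _ => rfl }

open Classical in
lemma card_adj_pairs : #{q : V × V | H.Adj q.1 q.2} = 2 * eCount H := by
  have h_degrees := H.sum_degrees_eq_twice_card_edges
  rw [SimpleGraph.edgeFinset] at h_degrees
  rw [eCount, Nat.card_eq_fintype_card, ← Set.toFinset_card, ← h_degrees, ← univ_product_univ,
    card_filter, sum_product]
  refine sum_congr rfl fun a _ => ?_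
  rw [← card_filter, ← SimpleGraph.card_neighborFinset_eq_degree]
  congr 1
  ext
  simp

open Classical in
lemma ite_mem_edgeImage (φ : V ↪ Fin n) (s : EdgeIdx n) :
    (if s ∈ edgeImage H φ then 1 else 0) =
      ∑ q : V × V with H.Adj q.1 q.2, if φ q.1 = s.1.1 ∧ φ q.2 = s.1.2 then 1 else 0 := by
  split_ifs with hs
  · obtain ⟨a, b, hab, ha, hb⟩ := (mem_edgeImage H).1 hs
    rw [sum_eq_single_of_mem (a, b) (by simpa using hab), if_pos ⟨ha, hb⟩]
    rintro ⟨a', b'⟩ - h_ne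
    refine if_neg fun ⟨ha', hb'⟩ => h_ne ?_
    exact Prod.ext (φ.injective (ha'.trans ha.symm)) (φ.injective (hb'.trans hb.symm))
  · refine (sum_eq_zero fun q hq => if_neg fun hφ => hs ?_).symm
    exact (mem_edgeImage H).2 ⟨q.1, q.2, (mem_filter.1 hq).2, hφ⟩

lemma card_mem_edgeImage (s : EdgeIdx n) :
    #{φ : V ↪ Fin n | s ∈ edgeImage H φ} =
      2 * eCount H * (n - 2).descFactorial (Fintype.card V - 2) := by
  classical
  rw [card_filter, sum_congr rfl fun φ _ => ite_mem_edgeImage H φ s, sum_comm, ← card_adj_pairs,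
    ← smul_eq_mul, ← sum_const]
  refine sum_congr rfl fun q hq => ?_
  rw [← card_filter, card_embedding_eq_eq s.2.ne (H.ne_of_adj (mem_filter.1 hq).2),
    Fintype.card_fin]

lemma exists_endpoint_notMem {s t : EdgeIdx n} (hts : t ≠ s) :
    ∃ z, s.1.1 ≠ z ∧ s.1.2 ≠ z ∧ (z = t.1.1 ∨ z = t.1.2) := by
  obtain ⟨⟨a, b⟩, hab⟩ := s
  obtain ⟨⟨c, d⟩, hcd⟩ := t
  dsimp only at hab hcd ⊢
  by_contra! h_notMem
  have hc := h_notMem c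
  have hd := h_notMem d
  obtain ⟨rfl, rfl⟩ : c = a ∧ d = b := by grind
  exact hts rfl

lemma card_mem_edgeImage_mem_edgeImage_mul_le {s t : EdgeIdx n} (hts : t ≠ s) :
    #{φ : V ↪ Fin n | s ∈ edgeImage H φ ∧ t ∈ edgeImage H φ} * n ^ 3 ≤
      Fintype.card V ^ 3 * n ^ Fintype.card V := by
  classical
  obtain ⟨z, hz₁, hz₂, hz⟩ := exists_endpoint_notMem hts
  have h_subset : ({φ : V ↪ Fin n | s ∈ edgeImage H φ ∧ t ∈ edgeImage H φ} : Finset _) ⊆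
      (univ : Finset (V × V × V)).biUnion fun q =>
        {φ : V ↪ Fin n | φ q.1 = s.1.1 ∧ φ q.2.1 = s.1.2 ∧ φ q.2.2 = z} := by
    intro φ hφ
    obtain ⟨hs, ht⟩ := (mem_filter.1 hφ).2
    obtain ⟨a, b, -, ha, hb⟩ := (mem_edgeImage H).1 hs
    obtain ⟨c, d, -, hc, hd⟩ := (mem_edgeImage H).1 ht
    rw [mem_biUnion]
    rcases hz with rfl | rfl
    · exact ⟨(a, b, c), mem_univ _, mem_filter.2 ⟨mem_univ _, ha, hb, hc⟩⟩
    · exact ⟨(a, b, d), mem_univ _, mem_filter.2 ⟨mem_univ _, ha, hb, hd⟩⟩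
  have h_triple (q : V × V × V) :
      #{φ : V ↪ Fin n | φ q.1 = s.1.1 ∧ φ q.2.1 = s.1.2 ∧ φ q.2.2 = z} * n ^ 3 ≤
        n ^ Fintype.card V := by
    simpa only [Fintype.card_fin] using
      card_embedding_eq_eq_eq_mul_le s.2.ne hz₁ hz₂ q.1 q.2.1 q.2.2
  calc _ ≤ (∑ q : V × V × V,
        #{φ : V ↪ Fin n | φ q.1 = s.1.1 ∧ φ q.2.1 = s.1.2 ∧ φ q.2.2 = z}) * n ^ 3 :=
        Nat.mul_le_mul_right _ ((card_le_card h_subset).trans card_biUnion_le)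
    _ ≤ ∑ _q : V × V × V, n ^ Fintype.card V := by
        rw [sum_mul]
        exact sum_le_sum fun q _ => h_triple q
    _ = _ := by
        rw [sum_const, card_univ, Fintype.card_prod, Fintype.card_prod, smul_eq_mul]
        ring

lemma two_le_card_of_eCount_ne_zero (h_edges : eCount H ≠ 0) : 2 ≤ Fintype.card V := by
  classical
  obtain ⟨⟨⟨e, he⟩⟩, -⟩ := Nat.card_pos_iff.1 (Nat.pos_of_ne_zero h_edges)
  induction e with | _ a b
  exact card_pair (H.ne_of_adj he) ▸ card_le_univ {a, b}

lemma card_edgeIdx (n : ℕ) : (Fintype.card (EdgeIdx n) : ℝ) = n * (n - 1) / 2 := by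
  have h_complete := card_edgeImage (⊤ : SimpleGraph (Fin n)) (Function.Embedding.refl _)
  rw [eq_univ_of_forall fun t => (mem_edgeImage _).2 ⟨t.1.1, t.1.2, t.2.ne, rfl, rfl⟩, card_univ,
    eCount, Nat.card_eq_fintype_card, ← Set.toFinset_card] at h_complete
  rw [h_complete, ← Nat.cast_choose_two]
  simpa using SimpleGraph.card_edgeFinset_top_eq_card_choose_two (V := Fin n)

end EdgeImage

/-! ### The exponential random graph model -/

section ErgmHamiltonian

variable {k : ℕ} (β : Fin (k + 1) → ℝ) (v : Fin (k + 1) → ℕ)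
  (H : ∀ j : Fin (k + 1), SimpleGraph (Fin (v j))) (n : ℕ)

/-- The monomials of the ERGM Hamiltonian as sets of coordinates: every embedding of one of the
graphs `H j` contributes the image of its edges. -/
def ergmEdges (α : Σ j : Fin (k + 1), Fin (v j) ↪ Fin n) : Finset (EdgeIdx n) :=
  edgeImage (H α.1) α.2

/-- The coefficients of the monomials of the ERGM Hamiltonian. -/
def ergmCoeff (α : Σ j : Fin (k + 1), Fin (v j) ↪ Fin n) : ℝ :=
  β α.1 * (n : ℝ) ^ ((2 : ℤ) - (v α.1 : ℤ))

/-- The Hamiltonian of the ERGM as a multilinear polynomial in the edge indicators. -/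
def ergmHamiltonian : (EdgeIdx n → Bool) → ℝ :=
  hamiltonian (ergmEdges v H n) (ergmCoeff β v n)

lemma ergmProb_eq_gibbsWeight : ergmProb β v H n = gibbsWeight (ergmHamiltonian β v H n) := by
  have h_weight (y : EdgeIdx n → Bool) :
      ergmWeight β v H n y = exp (ergmHamiltonian β v H n y) := by
    rw [ergmWeight, ergmHamiltonian, hamiltonian, Fintype.sum_sigma]
    simp_rw [homCount_eq_sum_boolMonomial, mul_sum]
    rfl
  funext y
  simp only [ergmProb, ergmZ, gibbsWeight, h_weight]

lemma ergmExp_eq_gibbsMean : ergmExp β v H n = gibbsMean (ergmHamiltonian β v H n) := by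
  funext F
  rw [ergmExp, gibbsMean, ergmProb_eq_gibbsWeight]

lemma ergmExp_sub_const (F : (EdgeIdx n → Bool) → ℝ) (a : ℝ) :
    ergmExp β v H n (fun y => F y - a) = ergmExp β v H n F - a := by
  rw [ergmExp_eq_gibbsMean, gibbsMean_sub, gibbsMean_const]

lemma Wn_eq_standardizedSum (p : ℝ) :
    Wn β v H p n = standardizedSum (ergmHamiltonian β v H n) √(sigmaSq β v H p n) := by
  have h_edgeSum : edgeSum = fun y : EdgeIdx n → Bool => ∑ s, boolMonomial {s} y := by
    funext y
    simp only [edgeSum, boolMonomial, prod_singleton]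
  funext y
  rw [Wn, standardizedSum, muN, ergmExp_eq_gibbsMean, h_edgeSum]

lemma card_ergmEdges (α : Σ j : Fin (k + 1), Fin (v j) ↪ Fin n) :
    #(ergmEdges v H n α) = eCount (H α.1) := card_edgeImage _ _

variable {n}

lemma abs_ergmCoeff (α : Σ j : Fin (k + 1), Fin (v j) ↪ Fin n) :
    |ergmCoeff β v n α| = ergmCoeff (fun j => |β j|) v n α := by
  rw [ergmCoeff, ergmCoeff, abs_mul, abs_zpow, Nat.abs_cast]

lemma sum_sigma_filter_fst {ι : Type*} {F : ι → Type*} [Fintype ι] [∀ j, Fintype (F j)]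
    (P : (Σ j, F j) → Prop) [DecidablePred P] (g : ι → ℝ) :
    ∑ α with P α, g α.1 = ∑ j, #{φ | P ⟨j, φ⟩} * g j := by
  rw [sum_filter, Fintype.sum_sigma]
  refine sum_congr rfl fun j _ => ?_
  rw [← sum_filter, sum_const (g j), nsmul_eq_mul]

lemma sum_mem_ergmEdges (g : Fin (k + 1) → ℝ) (s : EdgeIdx n) :
    ∑ α with s ∈ ergmEdges v H n α, ergmCoeff β v n α * g α.1 =
      ∑ j, 2 * (β j * eCount (H j) * g j) *
        ((n - 2).descFactorial (v j - 2) * (n : ℝ) ^ ((2 : ℤ) - (v j : ℤ))) := by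
  have h_sum := sum_sigma_filter_fst (s ∈ ergmEdges v H n ·)
    fun j => β j * (n : ℝ) ^ ((2 : ℤ) - (v j : ℤ)) * g j
  refine h_sum.trans (sum_congr rfl fun j _ => ?_)
  have h_count : #{φ | s ∈ ergmEdges v H n ⟨j, φ⟩} = _ := card_mem_edgeImage (H j) s
  rw [h_count, Fintype.card_fin]
  push_cast
  ring

/-- A constant, independent of `n`, controlling the errors in the local densities. -/
def ergmConst : ℝ :=
  2 + ∑ j, |β j| * ((v j : ℝ) ^ 3 + 2 * eCount (H j) * (1 + eCount (H j)) * (v j : ℝ) ^ 2)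

lemma two_le_ergmConst : 2 ≤ ergmConst β v H := le_add_of_nonneg_right (by positivity)

lemma sum_abs_mul_le_ergmConst {g : Fin (k + 1) → ℝ}
    (hg : ∀ j, g j ≤ (v j : ℝ) ^ 3 + 2 * eCount (H j) * (1 + eCount (H j)) * (v j : ℝ) ^ 2) :
    ∑ j, |β j| * g j ≤ ergmConst β v H :=
  (sum_le_sum fun j _ => mul_le_mul_of_nonneg_left (hg j) (abs_nonneg _)).trans
    (le_add_of_nonneg_left two_pos.le)

lemma abs_sum_mem_ergmEdges_sub_le (hn : n ≠ 0) {g : Fin (k + 1) → ℝ}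
    (hg : ∀ j, |g j| ≤ 1 + eCount (H j)) (s : EdgeIdx n) :
    |∑ α with s ∈ ergmEdges v H n α, ergmCoeff β v n α * g α.1 -
        2 * ∑ j, β j * eCount (H j) * g j| ≤ ergmConst β v H / n := by
  rw [sum_mem_ergmEdges, mul_sum, ← sum_sub_distrib]
  calc _ ≤ ∑ j, |β j| * (2 * eCount (H j) * (1 + eCount (H j)) * (v j : ℝ) ^ 2) / n := by
        refine (abs_sum_le_sum_abs _ _).trans (sum_le_sum fun j _ => ?_)
        rcases eq_or_ne (eCount (H j)) 0 with h_edgeless | h_edges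
        · simp [h_edgeless]
        have hv : 2 ≤ v j := Fintype.card_fin (v j) ▸ two_le_card_of_eCount_ne_zero _ h_edges
        rw [← mul_sub_one, abs_mul, abs_mul, abs_mul, abs_mul, abs_two, Nat.abs_cast]
        calc _ ≤ 2 * (|β j| * eCount (H j) * (1 + eCount (H j))) * ((v j : ℝ) ^ 2 / n) := by
              gcongr
              · exact hg j
              · exact abs_descFactorial_sub_two_mul_zpow_sub_one_le hn hv
          _ = _ := by ring
    _ ≤ _ := by
        rw [← sum_div]
        gcongr
        exact sum_abs_mul_le_ergmConst _ _ _ fun j => le_add_of_nonneg_left (by positivity)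

lemma jointWeight_ergm_le (hn : n ≠ 0) {s t : EdgeIdx n} (hts : t ≠ s) :
    jointWeight (ergmEdges v H n) (ergmCoeff β v n) s t ≤ ergmConst β v H / n := by
  have hn₀ : (0 : ℝ) < n := by positivity
  calc _ ≤ ∑ j, |β j| * (v j : ℝ) ^ 3 / n := by
        simp only [jointWeight, abs_ergmCoeff]
        refine (sum_sigma_filter_fst (fun α => s ∈ ergmEdges v H n α ∧ t ∈ ergmEdges v H n α)
          fun j => |β j| * (n : ℝ) ^ ((2 : ℤ) - (v j : ℤ))).trans_le (sum_le_sum fun j _ => ?_)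
        have h_count : (#{φ : Fin (v j) ↪ Fin n | s ∈ edgeImage (H j) φ ∧ t ∈ edgeImage (H j) φ} :
            ℝ) * n ^ 3 ≤ (v j : ℝ) ^ 3 * n ^ v j := by
          have h_nat := card_mem_edgeImage_mem_edgeImage_mul_le (H j) hts
          rw [Fintype.card_fin] at h_nat
          exact_mod_cast h_nat
        rw [zpow_sub₀ hn₀.ne', zpow_natCast]
        rw [← le_div_iff₀ (by positivity)] at h_count
        refine (mul_le_mul_of_nonneg_right h_count (by positivity)).trans_eq ?_
        field_simp
    _ ≤ _ := by
        rw [← sum_div]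
        gcongr
        exact sum_abs_mul_le_ergmConst _ _ _ fun j => le_add_of_nonneg_right (by positivity)

end ErgmHamiltonian

section MeanFieldEquation

variable {k : ℕ} (β : Fin (k + 1) → ℝ) (v : Fin (k + 1) → ℕ)
  (H : ∀ j : Fin (k + 1), SimpleGraph (Fin (v j)))

lemma phiFn_eq_sigmoid (a : ℝ) : phiFn β v H a = sigmoid (2 * PhiFn β v H a) := by
  rw [phiFn, sigmoid_def, exp_neg]
  field_simp

lemma deriv_PhiFn (a : ℝ) :
    deriv (PhiFn β v H) a =
      ∑ j, β j * eCount (H j) * (((eCount (H j) : ℝ) - 1) * a ^ (eCount (H j) - 2)) := by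
  refine (HasDerivAt.fun_sum fun j _ => ?_).deriv
  have h_pow := (hasDerivAt_pow (eCount (H j) - 1) a).const_mul (β j * (eCount (H j) : ℝ))
  rw [Nat.sub_sub] at h_pow
  refine h_pow.congr_deriv ?_
  rcases Nat.eq_zero_or_pos (eCount (H j)) with h_edgeless | h_edges
  · simp [h_edgeless]
  · rw [Nat.cast_pred h_edges]

lemma natCast_mul_sub_one_nonneg (e : ℕ) : 0 ≤ (e : ℝ) * (e - 1) := by
  rcases Nat.eq_zero_or_pos e with rfl | he
  · simp
  · exact mul_nonneg e.cast_nonneg (sub_nonneg.2 (by exact_mod_cast he))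

lemma abs_deriv_PhiFn_le {a : ℝ} (ha : |a| ≤ 1) :
    |deriv (PhiFn β v H) a| ≤ deriv (PhiFn (fun j => |β j|) v H) 1 := by
  rw [deriv_PhiFn, deriv_PhiFn]
  refine (abs_sum_le_sum_abs _ _).trans (sum_le_sum fun j _ => ?_)
  have h_nonneg := natCast_mul_sub_one_nonneg (eCount (H j))
  rw [one_pow, mul_one, mul_assoc (β j), ← mul_assoc (eCount (H j) : ℝ), abs_mul, abs_mul, abs_pow,
    abs_of_nonneg h_nonneg, mul_assoc |β j|]
  refine mul_le_mul_of_nonneg_left ?_ (abs_nonneg _)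
  exact mul_le_of_le_one_right h_nonneg (pow_le_one₀ (abs_nonneg a) ha)

lemma deriv_PhiFn_abs_one {β : Fin (k + 1) → ℝ} {v : Fin (k + 1) → ℕ}
    {H : ∀ j : Fin (k + 1), SimpleGraph (Fin (v j))} (hβ : ∀ j, eCount (H j) ≠ 1 → 0 ≤ β j) :
    deriv (PhiFn (fun j => |β j|) v H) 1 = deriv (PhiFn β v H) 1 := by
  rw [deriv_PhiFn, deriv_PhiFn]
  refine sum_congr rfl fun j _ => ?_
  rcases eq_or_ne (eCount (H j)) 1 with h_edge | h_edges
  · simp [h_edge]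
  · rw [abs_of_nonneg (hβ j h_edges)]

variable {β v H} {p : ℝ}

lemma one_sub_mul_deriv_PhiFn_pos (hp : p ∈ Set.Ioo 0 1)
    (hdob : deriv (PhiFn (fun j => |β j|) v H) 1 < 2) :
    0 < 1 - p * (1 - p) * (2 * deriv (PhiFn β v H) p) := by
  have h_deriv : deriv (PhiFn β v H) p < 2 :=
    ((le_abs_self _).trans (abs_deriv_PhiFn_le β v H
      (abs_le.2 ⟨by linarith [hp.1], hp.2.le⟩))).trans_lt hdob
  have h_var : 0 < p * (1 - p) := mul_pos hp.1 (sub_pos.2 hp.2)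
  nlinarith [sq_nonneg (p - 1 / 2)]

end MeanFieldEquation

section NormalApproximation

variable {k : ℕ} (β : Fin (k + 1) → ℝ) (v : Fin (k + 1) → ℕ)
  (H : ∀ j : Fin (k + 1), SimpleGraph (Fin (v j))) {n : ℕ} {p : ℝ}

lemma sum_jointWeight_ergm_le (s : EdgeIdx n) :
    ∑ t ∈ univ.erase s, jointWeight (ergmEdges v H n) (ergmCoeff β v n) s t ≤
      2 * deriv (PhiFn (fun j => |β j|) v H) 1 := by
  rw [← sum_abs_coeff_mul_card_sub_one]
  simp only [card_ergmEdges, abs_ergmCoeff]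
  rw [sum_mem_ergmEdges _ _ _ fun j => (eCount (H j) : ℝ) - 1, deriv_PhiFn, mul_sum]
  refine sum_le_sum fun j _ => ?_
  rcases eq_or_ne (eCount (H j)) 0 with h_edgeless | h_edges
  · simp [h_edgeless]
  have hv : 2 ≤ v j := Fintype.card_fin (v j) ▸ two_le_card_of_eCount_ne_zero _ h_edges
  have h_nonneg := natCast_mul_sub_one_nonneg (eCount (H j))
  rw [one_pow, mul_one]
  refine mul_le_of_le_one_right ?_ (descFactorial_sub_two_mul_zpow_le_one n hv)
  rw [mul_assoc]
  positivity

lemma sq_rpow_neg_half {x : ℝ} (hx : 0 ≤ x) : (x ^ (-(1 / 2 : ℝ))) ^ 2 = x⁻¹ := by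
  rw [← rpow_mul_natCast hx, ← rpow_neg_one]
  norm_num

lemma ergmConst_div_le (hn : n ≠ 0) :
    ergmConst β v H / n ≤ ergmConst β v H * (n : ℝ) ^ (-(1 / 2 : ℝ)) := by
  have h_const := two_le_ergmConst β v H
  rw [div_eq_mul_inv, ← rpow_neg_one]
  gcongr
  · exact_mod_cast Nat.one_le_iff_ne_zero.2 hn
  · norm_num

lemma one_le_ergmConst_mul_sqrt_card (hn : 2 ≤ n) :
    1 ≤ ergmConst β v H * (n : ℝ) ^ (-(1 / 2 : ℝ)) * √(Fintype.card (EdgeIdx n)) := by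
  have hn₂ : (2 : ℝ) ≤ n := by exact_mod_cast hn
  have h_sq : ((n : ℝ) ^ (-(1 / 2 : ℝ)) * √(Fintype.card (EdgeIdx n))) ^ 2 = (n - 1) / 2 := by
    rw [mul_pow, sq_rpow_neg_half n.cast_nonneg, sq_sqrt (Nat.cast_nonneg _), card_edgeIdx]
    field_simp
  have h_half : 1 / 2 ≤ (n : ℝ) ^ (-(1 / 2 : ℝ)) * √(Fintype.card (EdgeIdx n)) := by
    refine le_of_sq_le_sq ?_ (by positivity)
    rw [h_sq]
    linarith
  rw [mul_assoc]
  nlinarith [two_le_ergmConst β v H]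

lemma isDobrushinMeanField_ergm (hp : p ∈ Set.Ioo 0 1) (hfix : phiFn β v H p = p)
    (hdob : deriv (PhiFn (fun j => |β j|) v H) 1 < 2) (hn : 2 ≤ n) :
    IsDobrushinMeanField (ergmEdges v H n) (ergmCoeff β v n)
      (deriv (PhiFn (fun j => |β j|) v H) 1 / 2) (ergmConst β v H * (n : ℝ) ^ (-(1 / 2 : ℝ)))
      (1 + ∑ j, (eCount (H j) : ℝ)) p (2 * PhiFn β v H p) (2 * deriv (PhiFn β v H) p) := by
  have hn₀ : n ≠ 0 := by omega
  have h_pow_le (i : ℕ) : |p ^ i| ≤ 1 := by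
    rw [abs_of_nonneg (pow_nonneg hp.1.le _)]
    exact pow_le_one₀ hp.1.le hp.2.le
  have h_const := two_le_ergmConst β v H
  have h_const_div_le := ergmConst_div_le β v H hn₀
  exact
    { rho_lt_one := by linarith
      one_le_m := le_add_of_nonneg_right (by positivity)
      sigmoid_eq := (phiFn_eq_sigmoid β v H p).symm.trans hfix
      one_le_mul_sqrt_card := one_le_ergmConst_mul_sqrt_card β v H hn
      card_le := fun α => by
        rw [card_ergmEdges]
        have h_le_sum := single_le_sum (f := fun j => (eCount (H j) : ℝ))
          (fun _ _ => Nat.cast_nonneg _) (mem_univ α.1)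
        linarith
      jointWeight_le := fun s t hts => by
        rw [mul_pow, sq_rpow_neg_half n.cast_nonneg, ← div_eq_mul_inv]
        refine (jointWeight_ergm_le β v H hn₀ hts).trans ?_
        gcongr
        exact le_self_pow₀ (by linarith) two_ne_zero
      sum_jointWeight_le := fun s => (sum_jointWeight_ergm_le β v H s).trans_eq (by ring)
      first_order := fun s => by
        simp only [card_ergmEdges]
        refine (abs_sum_mem_ergmEdges_sub_le β v H hn₀ (g := fun j => p ^ (eCount (H j) - 1))
          (fun j => (h_pow_le _).trans (le_add_of_nonneg_right (Nat.cast_nonneg _)))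
          s).trans h_const_div_le
      second_order := fun s => by
        simp only [card_ergmEdges, deriv_PhiFn]
        refine (abs_sum_mem_ergmEdges_sub_le β v H hn₀
          (g := fun j => ((eCount (H j) : ℝ) - 1) * p ^ (eCount (H j) - 2))
          (fun j => ?_) s).trans h_const_div_le
        rw [abs_mul]
        refine (mul_le_of_le_one_right (abs_nonneg _) (h_pow_le _)).trans ((abs_sub _ _).trans ?_)
        rw [Nat.abs_cast, abs_one, add_comm] }

lemma sqrt_sigmaSq {κ : ℝ} (hκ : 0 ≤ κ) (hν : 1 - p * (1 - p) * (2 * deriv (PhiFn β v H) p) ≠ 0)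
    (hκ_sq : κ ^ 2 * (1 - p * (1 - p) * (2 * deriv (PhiFn β v H) p)) = p * (1 - p)) (n : ℕ) :
    √(sigmaSq β v H p n) = κ * √(Fintype.card (EdgeIdx n)) := by
  have h_sigmaSq : sigmaSq β v H p n = κ ^ 2 * Fintype.card (EdgeIdx n) := by
    rw [eq_div_of_mul_eq hν hκ_sq, card_edgeIdx, sigmaSq]
    ring
  rw [h_sigmaSq, sqrt_mul (sq_nonneg κ), sqrt_sq hκ]

lemma exists_forall_isSteinSolution_abs_ergmExp_le (hfix : phiFn β v H p = p)
    (hdob : deriv (PhiFn (fun j => |β j|) v H) 1 < 2) :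
    ∃ C : ℝ, 0 < C ∧ ∀ n : ℕ, 2 ≤ n → ∀ {q f g G : ℝ → ℝ} {B : ℝ}, IsSteinSolution q B f g G →
      |ergmExp β v H n (fun y => q (Wn β v H p n y))| ≤ B * (C * (n : ℝ) ^ (-(1 / 2 : ℝ))) := by
  have hp : p ∈ Set.Ioo 0 1 := by
    rw [← hfix, phiFn_eq_sigmoid]
    exact ⟨sigmoid_pos _, sigmoid_lt_one _⟩
  have h_var : 0 < p * (1 - p) := mul_pos hp.1 (sub_pos.2 hp.2)
  have hν := one_sub_mul_deriv_PhiFn_pos hp hdob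
  obtain ⟨κ, hκ, hκ_sq⟩ : ∃ κ : ℝ, 0 < κ ∧
      κ ^ 2 * (1 - p * (1 - p) * (2 * deriv (PhiFn β v H) p)) = p * (1 - p) := by
    refine ⟨_, sqrt_pos.2 (div_pos h_var hν), ?_⟩
    rw [sq_sqrt (div_pos h_var hν).le, div_mul_cancel₀ _ hν.ne']
  have hD (n : ℕ) (hn : 2 ≤ n) := isDobrushinMeanField_ergm β v H hp hfix hdob hn
  refine ⟨_, mul_pos ((hD 2 le_rfl).steinConst_pos hκ)
    (two_pos.trans_le (two_le_ergmConst β v H)), fun n hn q f g G B hq => ?_⟩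
  rw [ergmExp_eq_gibbsMean, Wn_eq_standardizedSum, sqrt_sigmaSq β v H hκ.le hν.ne' hκ_sq]
  exact ((hD n hn).abs_gibbsMean_standardizedSum_le hκ hκ_sq hq).trans_eq (by ring)

end NormalApproximation

theorem ergm_dobrushin_clt_general {k : ℕ} (β : Fin (k + 1) → ℝ) (v : Fin (k + 1) → ℕ)
    (H : ∀ j : Fin (k + 1), SimpleGraph (Fin (v j))) (p : ℝ) (hfix : phiFn β v H p = p)
    (hdob : deriv (PhiFn (fun j => |β j|) v H) 1 < 2) :
    ∃ C : ℝ, 0 < C ∧ ∀ n : ℕ, 2 ≤ n →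
      (∀ ψ : ℝ → ℝ, LipschitzWith 1 ψ →
        |(∑ y : EdgeIdx n → Bool, ergmProb β v H n y * ψ (Wn β v H p n y)) -
            ∫ z, ψ z ∂(gaussianReal 0 1)| ≤ C * (n : ℝ) ^ (-(1 / 2 : ℝ))) ∧
      (∀ x : ℝ,
        |(∑ y : EdgeIdx n → Bool,
              Set.indicator {y' : EdgeIdx n → Bool | Wn β v H p n y' ≤ x}
                (ergmProb β v H n) y) -
            ((gaussianReal 0 1) (Set.Iic x)).toReal| ≤ C * (n : ℝ) ^ (-(1 / 2 : ℝ))) := by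
  obtain ⟨C, hC, h_stein⟩ := exists_forall_isSteinSolution_abs_ergmExp_le β v H hfix hdob
  refine ⟨8 * C, by positivity, fun n hn => ⟨fun ψ hψ => ?_, fun x => ?_⟩⟩
  · obtain ⟨f, g, G, hψ_stein⟩ := exists_isSteinSolution_of_lipschitzWith hψ
    have h_bound := h_stein n hn hψ_stein
    rwa [ergmExp_sub_const, ← mul_assoc] at h_bound
  · have h_bound := h_stein n hn (isSteinSolution_indicatorSteinSolution x)
    rw [ergmExp_sub_const, ← mul_assoc, cdf_eq_real, measureReal_def] at h_bound
    convert h_bound using 4 with y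
    simp [ergmExp, Set.indicator_apply]

/-- **Theorem 3.2 (Dobrushin's uniqueness region)**: CLT with rate `n^{-1/2}`, in both the
Wasserstein and the Kolmogorov distances, for the standardized number of edges of an ERGM in
Dobrushin's uniqueness region `Φ_β'(1) < 2` (within the subcritical region). -/
theorem ergm_dobrushin_clt {k : ℕ} (β : Fin (k + 1) → ℝ) (v : Fin (k + 1) → ℕ)
    (H : ∀ j : Fin (k + 1), SimpleGraph (Fin (v j)))
    -- `β₂, …, β_k > 0`
    (hβ : ∀ j : Fin (k + 1), j ≠ 0 → 0 < β j)
    -- `H₁` is a single edge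
    (hv0 : v 0 = 2) (he0 : eCount (H 0) = 1)
    -- the graphs have no isolated vertices
    (hnoiso : ∀ (j : Fin (k + 1)) (a : Fin (v j)), ∃ b, (H j).Adj a b)
    -- `H₂, …, H_k` have at least two edges
    (hedges : ∀ j : Fin (k + 1), j ≠ 0 → 2 ≤ eCount (H j))
    -- the subcritical region: unique fixed point `p ∈ (0,1)` with `φ_β'(p) < 1`
    (p : ℝ) (hp : p ∈ Set.Ioo (0 : ℝ) 1)
    (hfix : phiFn β v H p = p)
    (huniq : ∀ q ∈ Set.Ioo (0 : ℝ) 1, phiFn β v H q = q → q = p)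
    (hsub : deriv (phiFn β v H) p < 1)
    -- Dobrushin's uniqueness region `Φ_β'(1) < 2`
    (hdob : deriv (PhiFn β v H) 1 < 2) :
    ∃ C : ℝ, 0 < C ∧ ∀ n : ℕ, 2 ≤ n →
      (∀ ψ : ℝ → ℝ, LipschitzWith 1 ψ →
        |(∑ y : EdgeIdx n → Bool, ergmProb β v H n y * ψ (Wn β v H p n y)) -
            ∫ z, ψ z ∂(gaussianReal 0 1)| ≤ C * (n : ℝ) ^ (-(1 / 2 : ℝ))) ∧
      (∀ x : ℝ,
        |(∑ y : EdgeIdx n → Bool,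
              Set.indicator {y' : EdgeIdx n → Bool | Wn β v H p n y' ≤ x}
                (ergmProb β v H n) y) -
            ((gaussianReal 0 1) (Set.Iic x)).toReal| ≤ C * (n : ℝ) ^ (-(1 / 2 : ℝ))) := by
  have hβ_nonneg (j) (hj : eCount (H j) ≠ 1) : 0 ≤ β j := (hβ j fun h => hj (h ▸ he0)).le
  exact ergm_dobrushin_clt_general β v H p hfix ((deriv_PhiFn_abs_one hβ_nonneg).trans_lt hdob)
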